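/- arXiv:2004.13129 — 3 statements merged into one kernel-verified Lean document; each statement's English description precedes it below -/
import Mathlib

section
/- Let n ≥ 1 be an integer. There exists a constant C_n ≥ 1, depending only on n, such that for every open convex set Ω ⊂ ℝ^{n+1}, every x ∈ ∂Ω, and every R > 0, one has μH[n](Ω ∩ ∂B_R(x)) ≤ (C_n / R) · μH[n](∂Ω ∩ B_R(x))^{(n+1)/n}, where ∂B_R(x) := {y ∈ ℝ^{n+1} : |y − x| = R}. -/
open MeasureTheory Set Filter Metric
open scoped ENNReal NNReal

/-!
Write `A` for the measure of `∂Ω ∩ B_R(x)` and let `r = R / 2`.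

Convexity supplies a supporting hyperplane at `x ∈ ∂Ω`, hence a pole `p` on `∂B_r(x)` at distance
at least `r` from `Ω`. Every segment from `p` to a point of the cap `Ω ∩ ∂B_r(x)` crosses `∂Ω`
inside `B_r(x)`, and projecting from `p` onto the sphere is `4`-Lipschitz away from `B_r(p)`, so
this cap has measure at most `4 ^ n * A`. Thus `Ω ∩ B_r(x)` has perimeter at most
`(1 + 4 ^ n) * A`, and by an isoperimetric inequality (of Loomis–Whitney type, since every shadow of
a bounded set on a coordinate hyperplane is covered by the shadow of its boundary) its volume is at
most a constant times `A ^ ((n + 1) / n)`.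

Conversely, `Ω` is star-shaped about `x`, so the radial shrinkings of the cap at radius `R` lie in
`Ω`; integrating the measures of these slices over radii in `(R / 4, R / 2)` bounds the volume of
`Ω ∩ B_r(x)` from below by a constant times `R` times the measure of the cap at radius `R`.
-/

section Frontier

variable {X : Type*} [TopologicalSpace X]

theorem frontier_inter_nonempty_of_isPreconnected {s t : Set X} (hs : IsPreconnected s)
    (hst : (s ∩ t).Nonempty) (hst' : ¬s ⊆ t) : (frontier t ∩ s).Nonempty := by
  have := Subtype.preconnectedSpace hs
  obtain ⟨y, hy⟩ : (frontier ((↑) ⁻¹' t : Set s)).Nonempty :=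
    nonempty_frontier_iff.2
      ⟨Subtype.preimage_coe_nonempty.2 hst, by simpa [preimage_eq_univ_iff] using hst'⟩
  exact ⟨y, continuous_subtype_val.frontier_preimage_subset t hy, y.2⟩

end Frontier

section Pole

variable {E : Type*} [NormedAddCommGroup E] [InnerProductSpace ℝ E]

theorem dist_reflection_orthogonal_span_singleton_le {u w : E} (hu : u ≠ 0) (hw : w ≠ 0) (v : E) :
    dist ((ℝ ∙ u)ᗮ.reflection v) ((ℝ ∙ w)ᗮ.reflection v) ≤ 4 * (‖v‖ / ‖w‖) * dist u w := by
  have hu' := norm_ne_zero_iff.2 hu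
  have hw' := norm_ne_zero_iff.2 hw
  set ι : E → E := fun z ↦ (1 / ‖z‖) ^ 2 • z
  have hreflection (z : E) : (ℝ ∙ z)ᗮ.reflection v = v - (2 * inner ℝ z v) • ι z := by
    rw [Submodule.reflection_orthogonal_apply, Submodule.reflection_singleton_apply]
    simp only [ι, RCLike.ofReal_real_eq_id, id_eq]
    module
  have hι : ‖ι u - ι w‖ = ‖u - w‖ / (‖u‖ * ‖w‖) := by
    rw [← dist_eq_norm, dist_div_norm_sq_smul hu hw, dist_eq_norm]
    ring
  have hιw : ‖ι w‖ = 1 / ‖w‖ := by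
    simp only [ι, norm_smul, norm_pow, norm_div, norm_one, norm_norm]
    field_simp
  rw [hreflection, hreflection, dist_sub_left, dist_eq_norm, dist_eq_norm]
  calc ‖(2 * inner ℝ u v) • ι u - (2 * inner ℝ w v) • ι w‖
      = ‖(2 * inner ℝ u v) • (ι u - ι w) + (2 * inner ℝ (u - w) v) • ι w‖ := by
        congr 1
        rw [inner_sub_left]
        module
    _ ≤ ‖(2 * inner ℝ u v) • (ι u - ι w)‖ + ‖(2 * inner ℝ (u - w) v) • ι w‖ := norm_add_le _ _
    _ = 2 * ‖inner ℝ u v‖ * (‖u - w‖ / (‖u‖ * ‖w‖)) + 2 * ‖inner ℝ (u - w) v‖ * (1 / ‖w‖) := by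
        simp only [norm_smul, norm_mul, hι, hιw, Real.norm_ofNat]
    _ ≤ 2 * (‖u‖ * ‖v‖) * (‖u - w‖ / (‖u‖ * ‖w‖)) + 2 * (‖u - w‖ * ‖v‖) * (1 / ‖w‖) := by
        gcongr <;> exact norm_inner_le_norm _ _
    _ = 4 * (‖v‖ / ‖w‖) * ‖u - w‖ := by
        field_simp
        ring

/-- Central projection from the pole `p` onto the sphere through `p` centred at `x`: the line
through `p` and `z ≠ p` meets that sphere a second time at `sphereProjection x p z`. The second
intersection is encoded as the mirror image of `p` in the hyperplane through `x` orthogonal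
to `z - p`. -/
noncomputable def sphereProjection (x p z : E) : E :=
  x + (ℝ ∙ (z - p))ᗮ.reflection (p - x)

theorem lipschitzOnWith_sphereProjection {x p : E} (hpx : p ≠ x) :
    LipschitzOnWith 4 (sphereProjection x p) {z | dist p x ≤ dist z p} := by
  refine LipschitzOnWith.of_dist_le_mul fun z hz w hw ↦ ?_
  have hpos : 0 < dist p x := dist_pos.2 hpx
  have hz : z - p ≠ 0 := sub_ne_zero.2 (dist_pos.1 (hpos.trans_le hz))
  have hw' : w - p ≠ 0 := sub_ne_zero.2 (dist_pos.1 (hpos.trans_le hw))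
  have hratio : ‖p - x‖ / ‖w - p‖ ≤ 1 := by
    rw [← dist_eq_norm, ← dist_eq_norm]
    exact div_le_one_of_le₀ hw dist_nonneg
  calc dist (sphereProjection x p z) (sphereProjection x p w)
      ≤ 4 * (‖p - x‖ / ‖w - p‖) * dist (z - p) (w - p) := by
        simpa only [sphereProjection, dist_add_left] using
          dist_reflection_orthogonal_span_singleton_le hz hw' (p - x)
    _ ≤ 4 * 1 * dist (z - p) (w - p) := by gcongr
    _ = 4 * dist z w := by rw [mul_one, dist_sub_right]

theorem sphereProjection_eq_of_mem_openSegment {x p y z : E} (h : dist p x = dist y x)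
    (hz : z ∈ openSegment ℝ p y) : sphereProjection x p z = y := by
  rw [openSegment_eq_image'] at hz
  obtain ⟨s, ⟨hs, -⟩, rfl⟩ := hz
  rw [dist_eq_norm, dist_eq_norm] at h
  have hspan : (ℝ ∙ (p + s • (y - p) - p)) = ℝ ∙ ((p - x) - (y - x)) := by
    rw [add_sub_cancel_left, sub_sub_sub_cancel_right, ← neg_sub y p, ← Set.neg_singleton,
      Submodule.span_neg, Submodule.span_singleton_smul_eq hs.ne'.isUnit]
  simp only [sphereProjection, hspan, Submodule.reflection_sub h, add_sub_cancel]

theorem inter_sphere_subset_image_sphereProjection {Ω : Set E} (hΩ : IsOpen Ω) {x p : E}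
    (hp : p ∉ closure Ω) :
    Ω ∩ sphere x (dist p x) ⊆
      sphereProjection x p '' (frontier Ω ∩ ball x (dist p x)) := by
  rintro y ⟨hyΩ, hy⟩
  obtain ⟨z, hz, hzpy⟩ := frontier_inter_nonempty_of_isPreconnected
    (convex_segment (𝕜 := ℝ) p y).isPreconnected ⟨y, right_mem_segment _ _ _, hyΩ⟩
    fun h ↦ hp (subset_closure (h (left_mem_segment _ _ _)))
  have hzp : p ≠ z := by
    rintro rfl
    exact hp hz.1
  have hzy : y ≠ z := by
    rintro rfl
    exact (hΩ.frontier_eq ▸ hz).2 hyΩ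
  have hpy : p ≠ y := by
    rintro rfl
    exact hp (subset_closure hyΩ)
  have hz' : z ∈ openSegment ℝ p y := mem_openSegment_of_ne_left_right hzp hzy hzpy
  exact ⟨z, ⟨hz, openSegment_subset_ball_of_ne (mem_closedBall.2 le_rfl) hy.le hpy hz'⟩,
    sphereProjection_eq_of_mem_openSegment hy.symm hz'⟩

theorem exists_mem_sphere_forall_le_dist_of_convex [CompleteSpace E] {Ω : Set E} (hΩ : IsOpen Ω)
    (hc : Convex ℝ Ω) (hne : Ω.Nonempty) {x : E} (hx : x ∉ Ω) {R : ℝ} (hR : 0 ≤ R) :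
    ∃ p ∈ sphere x R, ∀ z ∈ Ω, R ≤ dist z p := by
  obtain ⟨f, hf⟩ := geometric_hahn_banach_open_point hc hΩ hx
  set v := (InnerProductSpace.toDual ℝ E).symm f
  have hv (z : E) : inner ℝ v z = f z := InnerProductSpace.toDual_symm_apply
  have hv0 : v ≠ 0 := by
    intro h
    obtain ⟨z, hz⟩ := hne
    simpa [← hv, h] using hf z hz
  set p := R • ‖v‖⁻¹ • v
  have hp : ‖p‖ = R := by
    rw [norm_smul, norm_smul, norm_inv, norm_norm, inv_mul_cancel₀ (norm_ne_zero_iff.2 hv0),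
      mul_one, Real.norm_of_nonneg hR]
  refine ⟨x + p, by simp [hp], fun z hz ↦ ?_⟩
  have hinner : inner ℝ (z - x) p ≤ 0 := by
    rw [real_inner_comm, real_inner_smul_left, real_inner_smul_left, hv, map_sub]
    have := (sub_neg.2 (hf z hz)).le
    exact mul_nonpos_of_nonneg_of_nonpos hR (mul_nonpos_of_nonneg_of_nonpos (by positivity) this)
  have hsq : R ^ 2 ≤ ‖z - x - p‖ ^ 2 := by
    rw [norm_sub_sq_real, hp]
    nlinarith [sq_nonneg ‖z - x‖]
  rw [dist_eq_norm, ← sub_sub]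
  exact le_of_sq_le_sq hsq (norm_nonneg _)

theorem hausdorffMeasure_inter_sphere_le_frontier_inter_ball [CompleteSpace E] [MeasurableSpace E]
    [BorelSpace E] {Ω : Set E} (hΩ : IsOpen Ω) (hc : Convex ℝ Ω) {x : E} (hx : x ∉ Ω) {R : ℝ}
    (hR : 0 < R) {d : ℝ} (hd : 0 ≤ d) :
    μH[d] (Ω ∩ sphere x R) ≤ 4 ^ d * μH[d] (frontier Ω ∩ ball x R) := by
  rcases Ω.eq_empty_or_nonempty with rfl | hne
  · simp
  obtain ⟨p, rfl, hp⟩ := exists_mem_sphere_forall_le_dist_of_convex hΩ hc hne hx hR.le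
  have hcl : closure Ω ⊆ {z | dist p x ≤ dist z p} :=
    closure_minimal hp (isClosed_le (by fun_prop) (by fun_prop))
  have hp_notMem : p ∉ closure Ω := fun h ↦ by
    have := hcl h
    simp only [mem_ofPred_eq, dist_self] at this
    exact this.not_gt hR
  have hlip : LipschitzOnWith 4 (sphereProjection x p) (frontier Ω ∩ ball x (dist p x)) :=
    (lipschitzOnWith_sphereProjection (dist_pos.1 hR)).mono fun z hz ↦ hcl hz.1.1
  calc μH[d] (Ω ∩ sphere x (dist p x))
      ≤ μH[d] (sphereProjection x p '' (frontier Ω ∩ ball x (dist p x))) :=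
        measure_mono (inter_sphere_subset_image_sphereProjection hΩ hp_notMem)
    _ ≤ 4 ^ d * μH[d] (frontier Ω ∩ ball x (dist p x)) := by
        simpa using hlip.hausdorffMeasure_image_le hd

end Pole

section Eilenberg

variable {X : Type*} [EMetricSpace X]

theorem exists_cover_tsum_ediam_rpow_le [MeasurableSpace X] [BorelSpace X] {d : ℝ} (hd : 0 < d)
    {s : Set X} (hs : μH[d] s ≠ ∞) {ε : ℝ≥0∞} (hε : 0 < ε) :
    ∃ t : ℕ → Set X, s ⊆ ⋃ i, t i ∧ (∀ i, ediam (t i) ≤ ε) ∧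
      ∑' i, ediam (t i) ^ d ≤ μH[d] s + ε := by
  have hlt : ⨅ (t : ℕ → Set X) (_ : s ⊆ ⋃ i, t i) (_ : ∀ i, ediam (t i) ≤ ε),
      ∑' i, ⨆ _ : (t i).Nonempty, ediam (t i) ^ d < μH[d] s + ε := by
    refine lt_of_le_of_lt ?_ (ENNReal.lt_add_right hs hε.ne')
    rw [Measure.hausdorffMeasure_apply]
    exact le_iSup₂_of_le ε hε le_rfl
  simp only [iInf_lt_iff] at hlt
  obtain ⟨t, hst, hdiam, hsum⟩ := hlt
  refine ⟨t, hst, hdiam, le_of_eq_of_le (tsum_congr fun i ↦ ?_) hsum.le⟩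
  rcases (t i).eq_empty_or_nonempty with h | h
  · simp [h, hd]
  · simp [h]

theorem ediam_inter_fiber_rpow_le {Y : Type*} [TopologicalSpace Y] {d : ℝ} (hd : 0 < d)
    (f : X → Y) (t : Set X) (y : Y) :
    ediam (t ∩ f ⁻¹' {y}) ^ d ≤ (closure (f '' t)).indicator (fun _ ↦ ediam t ^ d) y := by
  rcases (t ∩ f ⁻¹' {y}).eq_empty_or_nonempty with h | ⟨x, hxt, rfl⟩
  · simp [h, hd]
  · rw [indicator_of_mem (subset_closure (mem_image_of_mem f hxt))]
    gcongr
    exact inter_subset_left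

theorem lintegral_indicator_closure_image_le {K : ℝ≥0} {f : X → ℝ} (hf : LipschitzWith K f)
    {d : ℝ} (hd : 0 ≤ d) (t : Set X) :
    ∫⁻ y, (closure (f '' t)).indicator (fun _ ↦ ediam t ^ d) y ≤ K * ediam t ^ (d + 1) := by
  rw [lintegral_indicator_const isClosed_closure.measurableSet,
    ENNReal.rpow_add_of_nonneg _ _ hd zero_le_one, ENNReal.rpow_one, mul_left_comm]
  gcongr
  calc volume (closure (f '' t)) ≤ ediam (closure (f '' t)) := Real.volume_le_diam _
    _ = ediam (f '' t) := ediam_closure _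
    _ ≤ K * ediam t := hf.ediam_image_le t

theorem lintegral_tsum_indicator_closure_image_le {K : ℝ≥0} {f : X → ℝ} (hf : LipschitzWith K f)
    {d : ℝ} (hd : 0 ≤ d) (t : ℕ → Set X) :
    ∫⁻ y, ∑' i, (closure (f '' t i)).indicator (fun _ ↦ ediam (t i) ^ d) y ≤
      K * ∑' i, ediam (t i) ^ (d + 1) := by
  rw [← ENNReal.tsum_mul_left, lintegral_tsum fun i ↦
    (measurable_const.indicator isClosed_closure.measurableSet).aemeasurable]
  exact ENNReal.tsum_le_tsum fun i ↦ lintegral_indicator_closure_image_le hf hd (t i)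

theorem lintegral_hausdorffMeasure_fiber_le_of_ne_top [MeasurableSpace X] [BorelSpace X]
    {K : ℝ≥0} {f : X → ℝ} (hf : LipschitzWith K f) {d : ℝ} (hd : 0 < d) {s : Set X}
    (hs : μH[d + 1] s ≠ ∞) :
    ∫⁻ y, μH[d] (s ∩ f ⁻¹' {y}) ≤ K * μH[d + 1] s := by
  choose t hst hdiam hsum using fun k : ℕ ↦
    exists_cover_tsum_ediam_rpow_le (add_pos hd one_pos) hs
      (ENNReal.inv_pos.2 (ENNReal.natCast_ne_top k))
  set g : ℕ → ℝ → ℝ≥0∞ := fun k y ↦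
    ∑' i, (closure (f '' t k i)).indicator (fun _ ↦ ediam (t k i) ^ d) y
  have hmeas (k : ℕ) : Measurable (g k) :=
    .tsum fun i ↦ measurable_const.indicator isClosed_closure.measurableSet
  have hfiber (y : ℝ) : μH[d] (s ∩ f ⁻¹' {y}) ≤ liminf (fun k ↦ g k y) atTop := by
    refine (Measure.hausdorffMeasure_le_liminf_tsum d _ _ ENNReal.tendsto_inv_nat_nhds_zero
      (fun k i ↦ t k i ∩ f ⁻¹' {y}) (.of_forall fun k i ↦ ?_) (.of_forall fun k ↦ ?_)).trans ?_
    · exact (ediam_mono inter_subset_left).trans (hdiam k i)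
    · rw [← iUnion_inter]
      exact inter_subset_inter_left _ (hst k)
    · exact liminf_le_liminf
        (.of_forall fun k ↦ ENNReal.tsum_le_tsum fun i ↦ ediam_inter_fiber_rpow_le hd f _ y)
  have hintegral (k : ℕ) : ∫⁻ y, g k y ≤ K * (μH[d + 1] s + (k : ℝ≥0∞)⁻¹) :=
    (lintegral_tsum_indicator_closure_image_le hf hd.le (t k)).trans (by gcongr; exact hsum k)
  have hlim : Tendsto (fun k : ℕ ↦ K * (μH[d + 1] s + (k : ℝ≥0∞)⁻¹)) atTop
      (nhds (K * μH[d + 1] s)) := by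
    simpa using ENNReal.Tendsto.const_mul
      (tendsto_const_nhds.add ENNReal.tendsto_inv_nat_nhds_zero) (.inr ENNReal.coe_ne_top)
  calc ∫⁻ y, μH[d] (s ∩ f ⁻¹' {y}) ≤ ∫⁻ y, liminf (fun k ↦ g k y) atTop := lintegral_mono hfiber
    _ ≤ liminf (fun k ↦ ∫⁻ y, g k y) atTop :=
        lintegral_liminf_le hmeas
    _ ≤ liminf (fun k : ℕ ↦ K * (μH[d + 1] s + (k : ℝ≥0∞)⁻¹)) atTop :=
        liminf_le_liminf (.of_forall hintegral)
    _ = K * μH[d + 1] s := hlim.liminf_eq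

/-- **Eilenberg's inequality**. As the integrand need not be measurable, `∫⁻` is a lower
integral. -/
theorem lintegral_hausdorffMeasure_fiber_le [MeasurableSpace X] [BorelSpace X] {K : ℝ≥0}
    {f : X → ℝ} (hf : LipschitzWith K f) {d : ℝ} (hd : 0 < d) (s : Set X) :
    ∫⁻ y, μH[d] (s ∩ f ⁻¹' {y}) ≤ K * μH[d + 1] s := by
  rcases ne_or_eq (μH[d + 1] s) ∞ with hs | hs
  · exact lintegral_hausdorffMeasure_fiber_le_of_ne_top hf hd hs
  rcases ne_or_eq K 0 with hK | rfl
  · simp [hs, ENNReal.mul_top, hK]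
  have hnull : volume (f '' s) = 0 := by
    simpa using (Real.volume_le_diam _).trans (hf.ediam_image_le s)
  have hempty : ∀ᵐ y, μH[d] (s ∩ f ⁻¹' {y}) = 0 := by
    filter_upwards [measure_eq_zero_iff_ae_notMem.1 hnull] with y hy
    have : s ∩ f ⁻¹' {y} = ∅ := eq_empty_of_forall_notMem fun x ⟨hxs, hxy⟩ ↦ hy ⟨x, hxs, hxy⟩
    rw [this, measure_empty]
  simp [lintegral_congr_ae hempty]

end Eilenberg

section Star

variable {E : Type*} [NormedAddCommGroup E] [NormedSpace ℝ E] [MeasurableSpace E] [BorelSpace E]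

theorem rpow_mul_hausdorffMeasure_inter_sphere_le {s : Set E} {x : E}
    (hs : ∀ y ∈ s, openSegment ℝ x y ⊆ s) {r R : ℝ} (hr : 0 < r) (hrR : r < R) {d : ℝ}
    (hd : 0 ≤ d) :
    ENNReal.ofReal (r / R) ^ d * μH[d] (s ∩ sphere x R) ≤ μH[d] (s ∩ sphere x r) := by
  have hR : 0 < R := hr.trans hrR
  have hsub : AffineMap.homothety x (r / R) '' (s ∩ sphere x R) ⊆ s ∩ sphere x r := by
    rintro _ ⟨y, ⟨hys, hyR⟩, rfl⟩
    rw [AffineMap.homothety_eq_lineMap]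
    refine ⟨hs y hys ?_, ?_⟩
    · rw [openSegment_eq_image_lineMap]
      exact mem_image_of_mem _ ⟨by positivity, (div_lt_one hR).2 hrR⟩
    · rw [mem_sphere, dist_lineMap_left, dist_comm, mem_sphere.1 hyR,
        Real.norm_of_nonneg (by positivity), div_mul_cancel₀ _ hR.ne']
  calc ENNReal.ofReal (r / R) ^ d * μH[d] (s ∩ sphere x R)
      = μH[d] (AffineMap.homothety x (r / R) '' (s ∩ sphere x R)) := by
        rw [hausdorffMeasure_homothety_image hd x (by positivity), ENNReal.smul_def, smul_eq_mul,
          ENNReal.coe_rpow_of_nonneg _ hd, ← enorm_eq_nnnorm,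
          Real.enorm_of_nonneg (by positivity)]
    _ ≤ μH[d] (s ∩ sphere x r) := measure_mono hsub

theorem mul_hausdorffMeasure_inter_sphere_le_inter_ball {s : Set E} {x : E}
    (hs : ∀ y ∈ s, openSegment ℝ x y ⊆ s) {a b R : ℝ} (ha : 0 < a) (hbR : b ≤ R)
    {d : ℝ} (hd : 0 < d) :
    ENNReal.ofReal (b - a) * (ENNReal.ofReal (a / R) ^ d * μH[d] (s ∩ sphere x R)) ≤
      μH[d + 1] (s ∩ ball x b) := by
  have hslice : ∀ r ∈ Ioo a b, ENNReal.ofReal (a / R) ^ d * μH[d] (s ∩ sphere x R) ≤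
      μH[d] (s ∩ ball x b ∩ (dist · x) ⁻¹' {r}) := by
    rintro r ⟨har, hrb⟩
    have hr : 0 < r := ha.trans har
    have hR : 0 < R := by linarith
    calc ENNReal.ofReal (a / R) ^ d * μH[d] (s ∩ sphere x R)
        ≤ ENNReal.ofReal (r / R) ^ d * μH[d] (s ∩ sphere x R) := by gcongr
      _ ≤ μH[d] (s ∩ sphere x r) :=
          rpow_mul_hausdorffMeasure_inter_sphere_le hs hr (hrb.trans_le hbR) hd.le
      _ ≤ μH[d] (s ∩ ball x b ∩ (dist · x) ⁻¹' {r}) :=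
          measure_mono fun y ⟨hys, hyr⟩ ↦ ⟨⟨hys, (mem_sphere.1 hyr).trans_lt hrb⟩, hyr⟩
  calc ENNReal.ofReal (b - a) * (ENNReal.ofReal (a / R) ^ d * μH[d] (s ∩ sphere x R))
      = ∫⁻ _ in Ioo a b, ENNReal.ofReal (a / R) ^ d * μH[d] (s ∩ sphere x R) := by
        rw [setLIntegral_const, Real.volume_Ioo, mul_comm]
    _ ≤ ∫⁻ r in Ioo a b, μH[d] (s ∩ ball x b ∩ (dist · x) ⁻¹' {r}) :=
        setLIntegral_mono' measurableSet_Ioo hslice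
    _ ≤ ∫⁻ r, μH[d] (s ∩ ball x b ∩ (dist · x) ⁻¹' {r}) := setLIntegral_le_lintegral _ _
    _ ≤ μH[d + 1] (s ∩ ball x b) := by
        simpa using
          lintegral_hausdorffMeasure_fiber_le (LipschitzWith.dist_left x) hd (s ∩ ball x b)

end Star

section LoomisWhitney

variable {n : ℕ}

/-- The cylinder of unit height in the `i`-th coordinate direction over the base `A`: it has the
same measure as `A` and turns `A` into a function on the whole space with unit line integrals. -/
def unitCylinder (i : Fin (n + 1)) (A : Set (Fin n → ℝ)) : Set (Fin (n + 1) → ℝ) :=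
  {x | x i ∈ Icc 0 1 ∧ i.removeNth x ∈ A}

theorem unitCylinder_eq_preimage (i : Fin (n + 1)) (A : Set (Fin n → ℝ)) :
    unitCylinder i A =
      MeasurableEquiv.piFinSuccAbove (fun _ ↦ ℝ) i ⁻¹' (Icc (0 : ℝ) 1 ×ˢ A) :=
  rfl

theorem measurableSet_unitCylinder (i : Fin (n + 1)) {A : Set (Fin n → ℝ)}
    (hA : MeasurableSet A) : MeasurableSet (unitCylinder i A) :=
  (MeasurableEquiv.piFinSuccAbove (fun _ ↦ ℝ) i).measurable (measurableSet_Icc.prod hA)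

theorem volume_unitCylinder (i : Fin (n + 1)) (A : Set (Fin n → ℝ)) :
    volume (unitCylinder i A) = volume A := by
  rw [unitCylinder_eq_preimage,
    (volume_preserving_piFinSuccAbove (fun _ ↦ ℝ) i).measure_preimage_equiv,
    Measure.volume_eq_prod, Measure.prod_prod]
  simp

theorem lintegral_indicator_unitCylinder_update {i : Fin (n + 1)} {A : Set (Fin n → ℝ)}
    {x : Fin (n + 1) → ℝ} (hx : i.removeNth x ∈ A) :
    ∫⁻ t, (unitCylinder i A).indicator 1 (Function.update x i t) = 1 := by
  have h (t : ℝ) :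
      (unitCylinder i A).indicator (1 : (Fin (n + 1) → ℝ) → ℝ≥0∞) (Function.update x i t) =
        (Icc (0 : ℝ) 1).indicator 1 t := by
    simp [indicator, unitCylinder, hx]
  simp [h]

theorem volume_iInter_preimage_removeNth_le (hn : n ≠ 0) {A : Fin (n + 1) → Set (Fin n → ℝ)}
    (hA : ∀ i, MeasurableSet (A i)) :
    volume (⋂ i, i.removeNth ⁻¹' A i : Set (Fin (n + 1) → ℝ)) ≤
      (∑ i, volume (A i)) ^ (((n : ℝ) + 1) / n) := by
  have hn' : (0 : ℝ) < n := by positivity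
  have hconj : Real.HolderConjugate (Fintype.card (Fin (n + 1))) (((n : ℝ) + 1) / n) := by
    rw [Fintype.card_fin, Nat.cast_succ, Real.holderConjugate_iff]
    refine ⟨by linarith, ?_⟩
    field_simp
    ring
  -- On a line in direction `i` over a point of `A i`, the `i`-th summand of `f` has integral one,
  -- so the grid-lines inequality `lintegral_prod_lintegral_pow_le` applies to `f`.
  set f : (Fin (n + 1) → ℝ) → ℝ≥0∞ := fun x ↦ ∑ i, (unitCylinder i (A i)).indicator 1 x
  have hindicator (i : Fin (n + 1)) :
      Measurable ((unitCylinder i (A i)).indicator (1 : (Fin (n + 1) → ℝ) → ℝ≥0∞)) :=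
    measurable_one.indicator (measurableSet_unitCylinder i (hA i))
  have hf : ∫⁻ x, f x = ∑ i, volume (A i) := by
    rw [lintegral_finsetSum _ fun i _ ↦ hindicator i]
    refine Finset.sum_congr rfl fun i _ ↦ ?_
    rw [lintegral_indicator_one (measurableSet_unitCylinder i (hA i)), volume_unitCylinder]
  have hline : ∀ x ∈ ⋂ i, i.removeNth ⁻¹' A i, ∀ i, 1 ≤ ∫⁻ t, f (Function.update x i t) :=
    fun x hx i ↦ calc
      1 = ∫⁻ t, (unitCylinder i (A i)).indicator 1 (Function.update x i t) :=
        (lintegral_indicator_unitCylinder_update (mem_iInter.1 hx i)).symm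
      _ ≤ ∫⁻ t, f (Function.update x i t) := lintegral_mono fun t ↦
        Finset.single_le_sum (f := fun j ↦ (unitCylinder j (A j)).indicator 1 _)
          (fun _ _ ↦ zero_le) (Finset.mem_univ i)
  have hmeas : MeasurableSet (⋂ i, i.removeNth ⁻¹' A i : Set (Fin (n + 1) → ℝ)) :=
    .iInter fun i ↦ (measurable_pi_iff.2 fun j ↦ measurable_pi_apply (i.succAbove j)) (hA i)
  calc volume (⋂ i, i.removeNth ⁻¹' A i : Set (Fin (n + 1) → ℝ))
      = ∫⁻ x, (⋂ i, i.removeNth ⁻¹' A i : Set (Fin (n + 1) → ℝ)).indicator 1 x :=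
        (lintegral_indicator_one hmeas).symm
    _ ≤ ∫⁻ x, ∏ i, (∫⁻ t, f (Function.update x i t)) ^
          ((1 : ℝ) / (Fintype.card (Fin (n + 1)) - 1 : ℝ)) := by
        refine lintegral_mono fun x ↦ indicator_apply_le' (fun hx ↦ ?_) fun _ ↦ zero_le
        exact Finset.one_le_prod' fun i _ ↦ ENNReal.one_le_rpow (hline x hx i) (by simp [hn'])
    _ ≤ (∑ i, volume (A i)) ^ (((n : ℝ) + 1) / n) := by
        rw [← hf]
        exact lintegral_prod_lintegral_pow_le (fun _ ↦ volume) hconj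
          (Finset.measurable_sum _ fun i _ ↦ hindicator i)

theorem volume_le_sum_volume_image_removeNth (hn : n ≠ 0) (s : Set (Fin (n + 1) → ℝ)) :
    volume s ≤ (∑ i : Fin (n + 1), volume (i.removeNth '' s)) ^ (((n : ℝ) + 1) / n) := by
  have hsub : s ⊆ ⋂ i : Fin (n + 1), i.removeNth ⁻¹' toMeasurable volume (i.removeNth '' s) :=
    subset_iInter fun i ↦ image_subset_iff.1 (subset_toMeasurable _ _)
  calc volume s ≤ _ := measure_mono hsub
    _ ≤ (∑ i : Fin (n + 1), volume (toMeasurable volume (i.removeNth '' s))) ^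
          (((n : ℝ) + 1) / n) :=
        volume_iInter_preimage_removeNth_le hn fun i ↦ measurableSet_toMeasurable _ _
    _ = _ := by simp only [measure_toMeasurable]

end LoomisWhitney

section Isoperimetric

variable {n : ℕ}

theorem image_removeNth_ofLp_subset_frontier (i : Fin (n + 1))
    {s : Set (EuclideanSpace ℝ (Fin (n + 1)))} (hs : Bornology.IsBounded s) :
    (fun y : EuclideanSpace ℝ (Fin (n + 1)) ↦ i.removeNth y.ofLp) '' s ⊆
      (fun y ↦ i.removeNth y.ofLp) '' frontier s := by
  rintro _ ⟨y, hy, rfl⟩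
  set line : ℝ → EuclideanSpace ℝ (Fin (n + 1)) := fun t ↦ y + EuclideanSpace.single i t
  have hline_isometry : Isometry line :=
    (isometry_add_left y).comp (.of_dist_eq fun t u ↦ by simp)
  have hline_unbounded : ¬range line ⊆ s := fun h ↦ (hs.subset h).ediam_ne_top <| by
    rw [hline_isometry.ediam_range, Metric.ediam_univ_of_noncompact]
  obtain ⟨_, hz, t, rfl⟩ := frontier_inter_nonempty_of_isPreconnected
    (isPreconnected_range hline_isometry.continuous) ⟨y, ⟨0, by simp [line]⟩, hy⟩ hline_unbounded
  refine ⟨line t, hz, ?_⟩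
  funext j
  simp [line, Fin.removeNth]

theorem lipschitzWith_removeNth_ofLp (i : Fin (n + 1)) :
    LipschitzWith 1 fun y : EuclideanSpace ℝ (Fin (n + 1)) ↦ i.removeNth y.ofLp :=
  .of_edist_le fun y z ↦ edist_pi_le_iff.2 fun j ↦ PiLp.edist_apply_le y z (i.succAbove j)

theorem volume_image_removeNth_ofLp_le (i : Fin (n + 1))
    (s : Set (EuclideanSpace ℝ (Fin (n + 1)))) :
    volume ((fun y : EuclideanSpace ℝ (Fin (n + 1)) ↦ i.removeNth y.ofLp) '' s) ≤
      μH[(n : ℝ)] s := by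
  simpa [← hausdorffMeasure_pi_real] using
    (lipschitzWith_removeNth_ofLp i).hausdorffMeasure_image_le n.cast_nonneg s

theorem volume_image_ofLp {ι : Type*} [Fintype ι] (s : Set (EuclideanSpace ℝ ι)) :
    volume (WithLp.ofLp '' s) = volume s := by
  have h := (EuclideanSpace.volume_preserving_symm_measurableEquiv_toLp ι).measure_preimage_equiv
    (WithLp.ofLp '' s)
  rw [← h]
  exact congrArg volume (preimage_image_eq s (WithLp.ofLp_injective 2))

theorem volume_le_hausdorffMeasure_frontier_rpow (hn : n ≠ 0)
    {s : Set (EuclideanSpace ℝ (Fin (n + 1)))} (hs : Bornology.IsBounded s) :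
    volume s ≤ ((n + 1) * μH[(n : ℝ)] (frontier s)) ^ (((n : ℝ) + 1) / n) := by
  have hproj (i : Fin (n + 1)) :
      volume (i.removeNth '' (WithLp.ofLp '' s)) ≤ μH[(n : ℝ)] (frontier s) := by
    rw [image_image]
    exact (measure_mono (image_removeNth_ofLp_subset_frontier i hs)).trans
      (volume_image_removeNth_ofLp_le i _)
  calc volume s = volume (WithLp.ofLp '' s) := (volume_image_ofLp s).symm
    _ ≤ (∑ i : Fin (n + 1), volume (i.removeNth '' (WithLp.ofLp '' s))) ^ (((n : ℝ) + 1) / n) :=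
        volume_le_sum_volume_image_removeNth hn _
    _ ≤ (∑ _i : Fin (n + 1), μH[(n : ℝ)] (frontier s)) ^ (((n : ℝ) + 1) / n) := by
        gcongr with i
        exact hproj i
    _ = ((n + 1) * μH[(n : ℝ)] (frontier s)) ^ (((n : ℝ) + 1) / n) := by simp

theorem hausdorffMeasure_euclideanSpace_le_volume {ι : Type*} [Fintype ι]
    (s : Set (EuclideanSpace ℝ ι)) :
    μH[Fintype.card ι] s ≤
      ENNReal.ofReal (√(Fintype.card ι) ^ Fintype.card ι) * volume s := by
  have h := (PiLp.antilipschitzWith_ofLp 2 fun _ : ι ↦ ℝ).le_hausdorffMeasure_image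
    (Nat.cast_nonneg (Fintype.card ι)) s
  rw [hausdorffMeasure_pi_real, volume_image_ofLp] at h
  convert h using 2
  rw [ENNReal.ofReal_pow (Real.sqrt_nonneg _), ENNReal.rpow_natCast, ← ENNReal.ofReal_coe_nnreal]
  simp [Real.sqrt_eq_rpow]

end Isoperimetric

section ConvexCap

theorem frontier_inter_ball_subset {X : Type*} [PseudoMetricSpace X] (s : Set X) (x : X) {r R : ℝ}
    (hrR : r < R) :
    frontier (s ∩ ball x r) ⊆ (frontier s ∩ ball x R) ∪ (s ∩ sphere x r) := by
  rintro y hy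
  rcases frontier_inter_subset s (ball x r) hy with ⟨hys, hyr⟩ | ⟨hys, hyr⟩
  · exact .inl ⟨hys, (closure_ball_subset_closedBall hyr).trans_lt hrR⟩
  have hyr' : y ∈ sphere x r := frontier_ball_subset_sphere hyr
  rw [closure_eq_self_union_frontier] at hys
  exact hys.symm.imp (fun h ↦ ⟨h, hyr'.trans_lt hrR⟩) fun h ↦ ⟨h, hyr'⟩

variable {n : ℕ} {Ω : Set (EuclideanSpace ℝ (Fin (n + 1)))} {x : EuclideanSpace ℝ (Fin (n + 1))}

theorem hausdorffMeasure_frontier_inter_ball_le (hΩ : IsOpen Ω) (hc : Convex ℝ Ω) (hx : x ∉ Ω)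
    {r R : ℝ} (hr : 0 < r) (hrR : r < R) :
    μH[(n : ℝ)] (frontier (Ω ∩ ball x r)) ≤ (1 + 4 ^ n) * μH[(n : ℝ)] (frontier Ω ∩ ball x R) := by
  have hcap : μH[(n : ℝ)] (Ω ∩ sphere x r) ≤ 4 ^ n * μH[(n : ℝ)] (frontier Ω ∩ ball x R) := calc
    _ ≤ 4 ^ (n : ℝ) * μH[(n : ℝ)] (frontier Ω ∩ ball x r) :=
      hausdorffMeasure_inter_sphere_le_frontier_inter_ball hΩ hc hx hr n.cast_nonneg
    _ ≤ 4 ^ n * μH[(n : ℝ)] (frontier Ω ∩ ball x R) := by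
      rw [ENNReal.rpow_natCast]
      gcongr
  calc μH[(n : ℝ)] (frontier (Ω ∩ ball x r))
      ≤ μH[(n : ℝ)] (frontier Ω ∩ ball x R) + μH[(n : ℝ)] (Ω ∩ sphere x r) :=
        (measure_mono (frontier_inter_ball_subset Ω x hrR)).trans (measure_union_le _ _)
    _ ≤ _ := add_le_add_right hcap _
    _ = (1 + 4 ^ n) * μH[(n : ℝ)] (frontier Ω ∩ ball x R) := by rw [one_add_mul]

theorem volume_inter_ball_le_of_convex (hn : n ≠ 0) (hΩ : IsOpen Ω) (hc : Convex ℝ Ω) (hx : x ∉ Ω)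
    {r R : ℝ} (hr : 0 < r) (hrR : r < R) :
    volume (Ω ∩ ball x r) ≤ ENNReal.ofReal (((n + 1) * (1 + 4 ^ n)) ^ (((n : ℝ) + 1) / n)) *
      μH[(n : ℝ)] (frontier Ω ∩ ball x R) ^ (((n : ℝ) + 1) / n) := calc
  volume (Ω ∩ ball x r)
      ≤ ((n + 1) * μH[(n : ℝ)] (frontier (Ω ∩ ball x r))) ^ (((n : ℝ) + 1) / n) :=
    volume_le_hausdorffMeasure_frontier_rpow hn (isBounded_ball.subset inter_subset_right)
  _ ≤ ((n + 1) * ((1 + 4 ^ n) * μH[(n : ℝ)] (frontier Ω ∩ ball x R))) ^ (((n : ℝ) + 1) / n) := by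
    gcongr
    exact hausdorffMeasure_frontier_inter_ball_le hΩ hc hx hr hrR
  _ = _ := by
    rw [← mul_assoc, ENNReal.mul_rpow_of_nonneg _ _ (by positivity),
      ← ENNReal.ofReal_rpow_of_nonneg (by positivity) (by positivity)]
    congr 2
    rw [ENNReal.ofReal_mul (by positivity), ENNReal.ofReal_add (by positivity) zero_le_one,
      ENNReal.ofReal_add zero_le_one (by positivity)]
    simp

theorem hausdorffMeasure_inter_sphere_le_volume_inter_ball (hn : n ≠ 0)
    (hΩ : ∀ y ∈ Ω, openSegment ℝ x y ⊆ Ω) {R : ℝ} (hR : 0 < R) :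
    μH[(n : ℝ)] (Ω ∩ sphere x R) ≤
      ENNReal.ofReal (4 ^ (n + 1) * √(n + 1) ^ (n + 1) / R) * volume (Ω ∩ ball x (R / 2)) := by
  have hslices : ENNReal.ofReal (R / 4 ^ (n + 1)) * μH[(n : ℝ)] (Ω ∩ sphere x R) ≤
      μH[(n : ℝ) + 1] (Ω ∩ ball x (R / 2)) := by
    have hscale : R / 4 ^ (n + 1) = (R / 2 - R / 4) * (R / 4 / R) ^ n := by
      rw [div_right_comm, div_self hR.ne', one_div_pow, pow_succ]
      ring
    rw [hscale, ENNReal.ofReal_mul (by linarith), ENNReal.ofReal_pow (by positivity), mul_assoc,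
      ← ENNReal.rpow_natCast]
    exact mul_hausdorffMeasure_inter_sphere_le_inter_ball hΩ (by positivity)
      (half_le_self hR.le) (by positivity)
  have hvolume : μH[(n : ℝ) + 1] (Ω ∩ ball x (R / 2)) ≤
      ENNReal.ofReal (√(n + 1) ^ (n + 1)) * volume (Ω ∩ ball x (R / 2)) := by
    simpa using hausdorffMeasure_euclideanSpace_le_volume (Ω ∩ ball x (R / 2))
  calc μH[(n : ℝ)] (Ω ∩ sphere x R)
      = ENNReal.ofReal (4 ^ (n + 1) / R) *
          (ENNReal.ofReal (R / 4 ^ (n + 1)) * μH[(n : ℝ)] (Ω ∩ sphere x R)) := by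
        rw [← mul_assoc, ← ENNReal.ofReal_mul (by positivity), div_mul_div_cancel₀ hR.ne',
          div_self (by positivity), ENNReal.ofReal_one, one_mul]
    _ ≤ ENNReal.ofReal (4 ^ (n + 1) / R) *
          (ENNReal.ofReal (√(n + 1) ^ (n + 1)) * volume (Ω ∩ ball x (R / 2))) := by
        gcongr _ * ?_
        exact hslices.trans hvolume
    _ = _ := by
        rw [← mul_assoc, ← ENNReal.ofReal_mul (by positivity), div_mul_eq_mul_div]

end ConvexCap

/-- Reverse perimeter-energy estimate for convex sets:
`|Ω ∩ ∂B_R(x)| ≤ (C_n / R) |∂Ω ∩ B_R(x)|^{(n+1)/n}`. -/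
theorem convex_sphere_cap_estimate (n : ℕ) (hn : 1 ≤ n) :
    ∃ C : ℝ, 1 ≤ C ∧
      ∀ (Ω : Set (EuclideanSpace ℝ (Fin (n+1)))), IsOpen Ω → Convex ℝ Ω →
      ∀ x ∈ frontier Ω, ∀ R : ℝ, 0 < R →
        μH[(n:ℝ)] (Ω ∩ sphere x R)
          ≤ ENNReal.ofReal (C / R) *
              (μH[(n:ℝ)] (frontier Ω ∩ ball x R)) ^ (((n:ℝ) + 1) / (n:ℝ)) := by
  have hn' : n ≠ 0 := Nat.one_le_iff_ne_zero.1 hn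
  refine ⟨4 ^ (n + 1) * √(n + 1) ^ (n + 1) * ((n + 1) * (1 + 4 ^ n)) ^ (((n : ℝ) + 1) / n),
    ?_, fun Ω hΩ hc x hx R hR ↦ ?_⟩
  · refine one_le_mul_of_one_le_of_one_le (one_le_mul_of_one_le_of_one_le
      (one_le_pow₀ (by norm_num)) (one_le_pow₀ (Real.one_le_sqrt.2 (by simp))))
      (Real.one_le_rpow (one_le_mul_of_one_le_of_one_le (by simp) (by simp)) (by positivity))
  have hxΩ : x ∉ Ω := (hΩ.frontier_eq ▸ hx).2
  have hstar : ∀ y ∈ Ω, openSegment ℝ x y ⊆ Ω := fun y hy ↦ by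
    simpa only [hΩ.interior_eq] using
      hc.openSegment_closure_interior_subset_interior hx.1 (hΩ.interior_eq.symm ▸ hy)
  calc μH[(n : ℝ)] (Ω ∩ sphere x R)
      ≤ ENNReal.ofReal (4 ^ (n + 1) * √(n + 1) ^ (n + 1) / R) * volume (Ω ∩ ball x (R / 2)) :=
        hausdorffMeasure_inter_sphere_le_volume_inter_ball hn' hstar hR
    _ ≤ ENNReal.ofReal (4 ^ (n + 1) * √(n + 1) ^ (n + 1) / R) *
          (ENNReal.ofReal (((n + 1) * (1 + 4 ^ n)) ^ (((n : ℝ) + 1) / n)) *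
            μH[(n : ℝ)] (frontier Ω ∩ ball x R) ^ (((n : ℝ) + 1) / n)) := by
        gcongr
        exact volume_inter_ball_le_of_convex hn' hΩ hc hxΩ (half_pos hR) (half_lt_self hR)
    _ = _ := by
        rw [← mul_assoc, ← ENNReal.ofReal_mul (by positivity), div_mul_eq_mul_div]
end

section
/- Let n ≥ 1 be an integer and let Ω ⊂ ℝ^{n+1} be a bounded open convex set. Then μH[n](∂Ω) ≤ |𝕊^n| · diam(Ω)^n / 2^n, where |𝕊^n| is the n-dimensional Hausdorff measure of the unit sphere {z ∈ ℝ^{n+1} : |z| = 1} and diam(Ω) is the Euclidean diameter of Ω. (Equality holds for balls, i.e., μH[n](∂B_1) / diam(B_1)^n = |𝕊^n| / 2^n.) -/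
open MeasureTheory Set Filter Metric
open scoped ENNReal NNReal

/-!
Cauchy's surface area formula writes the perimeter of a convex body, up to a constant depending only
on the dimension, as the average over the directions `u` of twice the measure of its projection to
`uᗮ`. A projection does not increase the diameter, so by the isodiametric inequality in `uᗮ` each
projection is at most as large as that of a ball with the same diameter as the body; averaging over
`u` gives the theorem.

For a polyhedron, Cauchy's formula holds because almost every line through its interior meets its
boundary twice. It passes to convex bodies by squeezing polyhedra between two homothetic copies and
using that the perimeter of convex bodies is monotone under inclusion. The isodiametric inequality
is the Brunn-Minkowski inequality, in the multiplicative form deduced from that of Prékopa and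
Leindler, for a set and its reflection in the origin.
-/

section PrekopaLeindler

open scoped Pointwise

variable {a b : ℝ}

lemma ennreal_geom_mean_le_arith_mean2_weighted (ha : 0 < a) (hb : 0 < b) (hab : a + b = 1)
    (x y : ℝ≥0∞) : x ^ a * y ^ b ≤ ENNReal.ofReal a * x + ENNReal.ofReal b * y := by
  induction x with
  | top => simp [ha]
  | coe x =>
    induction y with
    | top => simp [hb]
    | coe y =>
      lift a to ℝ≥0 using ha.le
      lift b to ℝ≥0 using hb.le
      rw [← ENNReal.coe_rpow_of_nonneg _ ha.le, ← ENNReal.coe_rpow_of_nonneg _ hb.le,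
        ENNReal.ofReal_coe_nnreal, ENNReal.ofReal_coe_nnreal]
      exact_mod_cast NNReal.geom_mean_le_arith_mean2_weighted a b x y (by exact_mod_cast hab)

lemma volume_add_volume_le_of_isCompact {A B : Set ℝ} (hA : IsCompact A) (hB : IsCompact B)
    (hA0 : A.Nonempty) (hB0 : B.Nonempty) : volume A + volume B ≤ volume (A + B) := by
  obtain ⟨a, haA, ha⟩ := hA.exists_isGreatest hA0
  obtain ⟨b, hbB, hb⟩ := hB.exists_isLeast hB0
  have hsub : (b +ᵥ A) ∪ (a +ᵥ B) ⊆ A + B := by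
    rintro _ (⟨x, hx, rfl⟩ | ⟨x, hx, rfl⟩)
    · exact ⟨x, hx, b, hbB, add_comm _ _⟩
    · exact ⟨a, haA, x, hx, rfl⟩
  have hdisj : AEDisjoint volume (b +ᵥ A) (a +ᵥ B) := by
    refine measure_mono_null (t := {a + b}) ?_ Real.volume_singleton
    rintro _ ⟨⟨x, hx, rfl⟩, ⟨y, hy, hxy⟩⟩
    have := ha hx
    have := hb hy
    simp only [vadd_eq_add, mem_singleton_iff] at hxy ⊢
    linarith
  calc volume A + volume B = volume (b +ᵥ A) + volume (a +ᵥ B) := by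
        rw [measure_vadd, measure_vadd]
    _ = volume ((b +ᵥ A) ∪ (a +ᵥ B)) :=
        (measure_union₀ (hB.measurableSet.const_vadd a).nullMeasurableSet hdisj).symm
    _ ≤ volume (A + B) := measure_mono hsub

lemma volume_add_volume_le {A B : Set ℝ} (hA : MeasurableSet A) (hB : MeasurableSet B)
    (hA0 : A.Nonempty) (hB0 : B.Nonempty) : volume A + volume B ≤ volume (A + B) := by
  obtain ⟨a, ha⟩ := hA0
  obtain ⟨b, hb⟩ := hB0
  rw [hA.measure_eq_iSup_isCompact, hB.measure_eq_iSup_isCompact]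
  simp only [iSup_and']
  refine ENNReal.biSup_add_biSup_le' ⟨∅, empty_subset _, isCompact_empty⟩
    ⟨∅, empty_subset _, isCompact_empty⟩ fun K ⟨hKA, hK⟩ L ⟨hLB, hL⟩ ↦ ?_
  calc volume K + volume L ≤ volume (insert a K) + volume (insert b L) := by
        gcongr <;> exact subset_insert _ _
    _ ≤ volume (insert a K + insert b L) :=
        volume_add_volume_le_of_isCompact (hK.insert a) (hL.insert b) (insert_nonempty _ _)
          (insert_nonempty _ _)
    _ ≤ volume (A + B) := by
        gcongr
        · exact insert_subset ha hKA
        · exact insert_subset hb hLB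

lemma lintegral_eq_lintegral_meas_ofReal_lt {α : Type*} [MeasurableSpace α] (μ : Measure α)
    {f : α → ℝ≥0∞} (hf : Measurable f) (hf_top : ∀ x, f x ≠ ⊤) :
    ∫⁻ x, f x ∂μ = ∫⁻ t in Ioi (0 : ℝ), μ {x | ENNReal.ofReal t < f x} := by
  have hf_eq (x) : f x = ENNReal.ofReal (f x).toReal := (ENNReal.ofReal_toReal (hf_top x)).symm
  rw [lintegral_congr hf_eq, lintegral_eq_lintegral_meas_lt μ
    (Eventually.of_forall fun x ↦ ENNReal.toReal_nonneg) hf.ennreal_toReal.aemeasurable]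
  refine setLIntegral_congr_fun measurableSet_Ioi fun t ht ↦ ?_
  simp only [ENNReal.ofReal_lt_iff_lt_toReal (le_of_lt ht) (hf_top _)]

lemma measurable_meas_ofReal_lt {α : Type*} [MeasurableSpace α] (μ : Measure α) (f : α → ℝ≥0∞) :
    Measurable fun t : ℝ ↦ μ {x | ENNReal.ofReal t < f x} :=
  Antitone.measurable fun _ _ hst ↦ measure_mono fun _ hx ↦
    (ENNReal.ofReal_le_ofReal hst).trans_lt hx

lemma lt_rpow_mul_rpow (ha : 0 < a) (hb : 0 < b) (hab : a + b = 1) {t x y : ℝ≥0∞}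
    (hx : t < x) (hy : t < y) : t < x ^ a * y ^ b :=
  calc t = t ^ a * t ^ b := by
        rw [← ENNReal.rpow_add_of_nonneg _ _ ha.le hb.le, hab, ENNReal.rpow_one]
    _ < x ^ a * y ^ b :=
        ENNReal.mul_lt_mul (ENNReal.rpow_lt_rpow hx ha) (ENNReal.rpow_lt_rpow hy hb)

lemma ofReal_mul_volume_add_ofReal_mul_volume_le (ha : 0 < a) (hb : 0 < b) {A B : Set ℝ}
    (hA : MeasurableSet A) (hB : MeasurableSet B) (hA0 : A.Nonempty) (hB0 : B.Nonempty) :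
    ENNReal.ofReal a * volume A + ENNReal.ofReal b * volume B ≤ volume (a • A + b • B) := by
  have hsmul {c : ℝ} (hc : 0 < c) (S : Set ℝ) : ENNReal.ofReal c * volume S = volume (c • S) := by
    simp [Measure.addHaar_smul, abs_of_pos hc]
  rw [hsmul ha, hsmul hb]
  exact volume_add_volume_le (hA.const_smul_of_ne_zero ha.ne') (hB.const_smul_of_ne_zero hb.ne')
    hA0.smul_set hB0.smul_set

lemma volume_superlevel_add_le (ha : 0 < a) (hb : 0 < b) (hab : a + b = 1)
    {f g h : ℝ → ℝ≥0∞} (hf : Measurable f) (hg : Measurable g) (hsup : ⨆ x, f x = ⨆ x, g x)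
    (H : ∀ x y, f x ^ a * g y ^ b ≤ h (a * x + b * y)) (t : ℝ≥0∞) :
    ENNReal.ofReal a * volume {x | t < f x} + ENNReal.ofReal b * volume {x | t < g x}
      ≤ volume {x | t < h x} := by
  rcases lt_or_ge t (⨆ x, f x) with ht | ht
  · refine (ofReal_mul_volume_add_ofReal_mul_volume_le ha hb (measurableSet_lt measurable_const hf)
      (measurableSet_lt measurable_const hg) (lt_iSup_iff.1 ht)
      (lt_iSup_iff.1 (ht.trans_eq hsup))).trans (measure_mono ?_)
    rintro _ ⟨_, ⟨x, hx, rfl⟩, _, ⟨y, hy, rfl⟩, rfl⟩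
    exact (lt_rpow_mul_rpow ha hb hab hx hy).trans_le (H x y)
  · have hf0 : {x | t < f x} = ∅ := by simpa [eq_empty_iff_forall_notMem] using ht
    have hg0 : {x | t < g x} = ∅ := by simpa [eq_empty_iff_forall_notMem, hsup] using ht
    simp [hf0, hg0]

lemma lintegral_add_lintegral_le_of_iSup_eq_one (ha : 0 < a) (hb : 0 < b) (hab : a + b = 1)
    {f g h : ℝ → ℝ≥0∞} (hf : Measurable f) (hg : Measurable g) (hh : Measurable h)
    (hf1 : ⨆ x, f x = 1) (hg1 : ⨆ x, g x = 1)
    (H : ∀ x y, f x ^ a * g y ^ b ≤ h (a * x + b * y)) :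
    ENNReal.ofReal a * (∫⁻ x, f x) + ENNReal.ofReal b * (∫⁻ x, g x) ≤ ∫⁻ x, h x := by
  have hf_le (x) : f x ≤ 1 := hf1 ▸ le_iSup f x
  have hg_le (x) : g x ≤ 1 := hg1 ▸ le_iSup g x
  have hmin (x y) : f x ^ a * g y ^ b ≤ min (h (a * x + b * y)) 1 := by
    refine le_min (H x y) (mul_le_one' ?_ ?_)
    · exact ENNReal.rpow_le_one (hf_le x) ha.le
    · exact ENNReal.rpow_le_one (hg_le y) hb.le
  have ne_top {x : ℝ≥0∞} (hx : x ≤ 1) : x ≠ ⊤ := ne_top_of_le_ne_top ENNReal.one_ne_top hx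
  calc ENNReal.ofReal a * (∫⁻ x, f x) + ENNReal.ofReal b * (∫⁻ x, g x)
      = ∫⁻ t in Ioi (0 : ℝ), (ENNReal.ofReal a * volume {x | ENNReal.ofReal t < f x}
          + ENNReal.ofReal b * volume {x | ENNReal.ofReal t < g x}) := by
        rw [lintegral_eq_lintegral_meas_ofReal_lt _ hf fun x ↦ ne_top (hf_le x),
          lintegral_eq_lintegral_meas_ofReal_lt _ hg fun x ↦ ne_top (hg_le x),
          lintegral_add_left ((measurable_meas_ofReal_lt _ f).const_mul _),
          lintegral_const_mul _ (measurable_meas_ofReal_lt _ f),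
          lintegral_const_mul _ (measurable_meas_ofReal_lt _ g)]
    _ ≤ ∫⁻ t in Ioi (0 : ℝ), volume {x | ENNReal.ofReal t < min (h x) 1} :=
        lintegral_mono fun t ↦
          volume_superlevel_add_le ha hb hab hf hg (hf1.trans hg1.symm) hmin _
    _ = ∫⁻ x, min (h x) 1 :=
        (lintegral_eq_lintegral_meas_ofReal_lt _ (hh.min measurable_const)
          fun x ↦ ne_top (min_le_right _ _)).symm
    _ ≤ ∫⁻ x, h x := lintegral_mono fun x ↦ min_le_left _ _

lemma prekopa_leindler_one_of_bounded (ha : 0 < a) (hb : 0 < b) (hab : a + b = 1)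
    {f g h : ℝ → ℝ≥0∞} (hf : Measurable f) (hg : Measurable g) (hh : Measurable h)
    (hf_top : ⨆ x, f x ≠ ⊤) (hg_top : ⨆ x, g x ≠ ⊤)
    (H : ∀ x y, f x ^ a * g y ^ b ≤ h (a * x + b * y)) :
    (∫⁻ x, f x) ^ a * (∫⁻ x, g x) ^ b ≤ ∫⁻ x, h x := by
  set α := ⨆ x, f x with hα
  set β := ⨆ x, g x with hβ
  rcases eq_or_ne α 0 with h0 | hα0
  · have hf0 (x) : f x = 0 := le_zero_iff.1 (h0 ▸ le_iSup f x)
    simp [hf0, ha]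
  rcases eq_or_ne β 0 with h0 | hβ0
  · have hg0 (x) : g x = 0 := le_zero_iff.1 (h0 ▸ le_iSup g x)
    simp [hg0, hb]
  set c := (α ^ a)⁻¹ * (β ^ b)⁻¹
  have hc0 : c ≠ 0 := mul_ne_zero
    (ENNReal.inv_ne_zero.2 (ENNReal.rpow_ne_top_of_nonneg ha.le hf_top))
    (ENNReal.inv_ne_zero.2 (ENNReal.rpow_ne_top_of_nonneg hb.le hg_top))
  have hc_top : c ≠ ⊤ := ENNReal.mul_ne_top
    (ENNReal.inv_ne_top.2 (by simp [ENNReal.rpow_eq_zero_iff, hα0, ha.not_gt]))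
    (ENNReal.inv_ne_top.2 (by simp [ENNReal.rpow_eq_zero_iff, hβ0, hb.not_gt]))
  have hscale (x y : ℝ≥0∞) : (α⁻¹ * x) ^ a * (β⁻¹ * y) ^ b = c * (x ^ a * y ^ b) := by
    rw [ENNReal.mul_rpow_of_nonneg _ _ ha.le, ENNReal.mul_rpow_of_nonneg _ _ hb.le,
      ENNReal.inv_rpow, ENNReal.inv_rpow, mul_mul_mul_comm]
  have hnormalized := lintegral_add_lintegral_le_of_iSup_eq_one ha hb hab
    (f := fun x ↦ α⁻¹ * f x) (g := fun x ↦ β⁻¹ * g x) (h := fun x ↦ c * h x)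
    (hf.const_mul _) (hg.const_mul _) (hh.const_mul _)
    (by rw [← ENNReal.mul_iSup, ← hα, ENNReal.inv_mul_cancel hα0 hf_top])
    (by rw [← ENNReal.mul_iSup, ← hβ, ENNReal.inv_mul_cancel hβ0 hg_top])
    (fun x y ↦ by rw [hscale]; gcongr; exact H x y)
  rw [lintegral_const_mul _ hf, lintegral_const_mul _ hg, lintegral_const_mul _ hh] at hnormalized
  rw [← ENNReal.mul_le_mul_iff_right hc0 hc_top, ← hscale]
  exact (ennreal_geom_mean_le_arith_mean2_weighted ha hb hab _ _).trans hnormalized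

lemma lintegral_eq_iSup_lintegral_min_natCast {α : Type*} [MeasurableSpace α] {μ : Measure α}
    {f : α → ℝ≥0∞} (hf : Measurable f) :
    ∫⁻ x, f x ∂μ = ⨆ N : ℕ, ∫⁻ x, min (f x) N ∂μ := by
  rw [← lintegral_iSup (fun N ↦ hf.min measurable_const)
    fun M N hMN x ↦ min_le_min_left _ (by exact_mod_cast hMN)]
  simp only [← inf_iSup_eq, ENNReal.iSup_natCast, inf_top_eq]

lemma ennreal_iSup_rpow {ι : Sort*} (f : ι → ℝ≥0∞) (ha : 0 < a) :
    (⨆ i, f i) ^ a = ⨆ i, f i ^ a :=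
  (ENNReal.orderIsoRpow a ha).map_iSup f

lemma prekopa_leindler_one (ha : 0 < a) (hb : 0 < b) (hab : a + b = 1)
    {f g h : ℝ → ℝ≥0∞} (hf : Measurable f) (hg : Measurable g) (hh : Measurable h)
    (H : ∀ x y, f x ^ a * g y ^ b ≤ h (a * x + b * y)) :
    (∫⁻ x, f x) ^ a * (∫⁻ x, g x) ^ b ≤ ∫⁻ x, h x := by
  rw [lintegral_eq_iSup_lintegral_min_natCast hf, lintegral_eq_iSup_lintegral_min_natCast hg,
    ennreal_iSup_rpow _ ha, ennreal_iSup_rpow _ hb]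
  simp_rw [ENNReal.iSup_mul, ENNReal.mul_iSup]
  have ne_top (F : ℝ → ℝ≥0∞) (N : ℕ) : ⨆ x, min (F x) N ≠ ⊤ :=
    ne_top_of_le_ne_top (ENNReal.natCast_ne_top N) (iSup_le fun x ↦ min_le_right _ _)
  refine iSup_le fun N ↦ iSup_le fun M ↦ prekopa_leindler_one_of_bounded ha hb hab
    (hf.min measurable_const) (hg.min measurable_const) hh (ne_top f N) (ne_top g M)
    fun x y ↦ le_trans ?_ (H x y)
  gcongr <;> exact min_le_left _ _

theorem prekopa_leindler (ha : 0 < a) (hb : 0 < b) (hab : a + b = 1) {n : ℕ}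
    {f g h : (Fin n → ℝ) → ℝ≥0∞} (hf : Measurable f) (hg : Measurable g) (hh : Measurable h)
    (H : ∀ x y, f x ^ a * g y ^ b ≤ h (a • x + b • y)) :
    (∫⁻ x, f x) ^ a * (∫⁻ x, g x) ^ b ≤ ∫⁻ x, h x := by
  induction n with
  | zero =>
    have lintegral_eq (F : (Fin 0 → ℝ) → ℝ≥0∞) : ∫⁻ x, F x = F 0 := by
      rw [volume_pi, Measure.pi_of_empty _ 0]
      exact lintegral_dirac _ _
    simpa [lintegral_eq] using H 0 0
  | succ n ih =>
    let e := MeasurableEquiv.piFinSuccAbove (fun _ : Fin (n + 1) ↦ ℝ) 0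
    have he : MeasurePreserving e.symm :=
      (volume_preserving_piFinSuccAbove (fun _ : Fin (n + 1) ↦ ℝ) 0).symm
    have he_comb (s t : ℝ) (x y : Fin n → ℝ) :
        a • e.symm (s, x) + b • e.symm (t, y) = e.symm (a * s + b * t, a • x + b • y) := by
      ext i
      refine Fin.cases ?_ (fun i ↦ ?_) i <;>
        simp [e, MeasurableEquiv.piFinSuccAbove, Fin.insertNthEquiv]
    have fubini {F : (Fin (n + 1) → ℝ) → ℝ≥0∞} (hF : Measurable F) :
        ∫⁻ x, F x = ∫⁻ y : Fin n → ℝ, ∫⁻ s : ℝ, F (e.symm (s, y)) := by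
      rw [← he.lintegral_comp hF, Measure.volume_eq_prod, lintegral_prod_symm']
      exact hF.comp e.symm.measurable
    have measurable_marginal {F : (Fin (n + 1) → ℝ) → ℝ≥0∞} (hF : Measurable F) :
        Measurable fun y : Fin n → ℝ ↦ ∫⁻ s : ℝ, F (e.symm (s, y)) :=
      (hF.comp e.symm.measurable).lintegral_prod_left'
    have measurable_section {F : (Fin (n + 1) → ℝ) → ℝ≥0∞} (hF : Measurable F) (y) :
        Measurable fun s : ℝ ↦ F (e.symm (s, y)) :=
      hF.comp (e.symm.measurable.comp (measurable_id.prodMk measurable_const))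
    rw [fubini hf, fubini hg, fubini hh]
    refine ih (measurable_marginal hf) (measurable_marginal hg) (measurable_marginal hh)
      fun x y ↦ prekopa_leindler_one ha hb hab (measurable_section hf x) (measurable_section hg y)
        (measurable_section hh _) fun s t ↦ ?_
    rw [← he_comb]
    exact H _ _

end PrekopaLeindler

section IsodiametricInequality

open scoped Pointwise

lemma volume_rpow_mul_volume_rpow_le {a b : ℝ} (ha : 0 < a) (hb : 0 < b) (hab : a + b = 1) {n : ℕ}
    {A B : Set (Fin n → ℝ)} (hA : IsCompact A) (hB : IsCompact B) :
    volume A ^ a * volume B ^ b ≤ volume (a • A + b • B) := by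
  have hC : MeasurableSet (a • A + b • B) := ((hA.smul a).add (hB.smul b)).measurableSet
  have hPL := prekopa_leindler ha hb hab (measurable_one.indicator hA.measurableSet)
    (measurable_one.indicator hB.measurableSet)
    (measurable_one (α := ℝ≥0∞).indicator hC) fun x y ↦ by
      by_cases hx : x ∈ A <;> by_cases hy : y ∈ B <;> simp [hx, hy, ha, hb]
      simp [Set.add_mem_add (smul_mem_smul_set hx) (smul_mem_smul_set hy)]
  simpa only [lintegral_indicator_one hA.measurableSet, lintegral_indicator_one hB.measurableSet,
    lintegral_indicator_one hC] using hPL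

variable {V : Type*} [NormedAddCommGroup V] [NormedSpace ℝ V] [FiniteDimensional ℝ V]
  [MeasurableSpace V] [BorelSpace V] (μ : Measure V) [μ.IsAddHaarMeasure]

theorem addHaar_rpow_mul_addHaar_rpow_le {a b : ℝ} (ha : 0 < a) (hb : 0 < b) (hab : a + b = 1)
    {A B : Set V} (hA : IsCompact A) (hB : IsCompact B) :
    μ A ^ a * μ B ^ b ≤ μ (a • A + b • B) := by
  let e : V ≃L[ℝ] (Fin (Module.finrank ℝ V) → ℝ) :=
    ContinuousLinearEquiv.ofFinrankEq (Module.finrank_fin_fun ℝ).symm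
  have : (Measure.map e μ).IsAddHaarMeasure := e.isAddHaarMeasure_map μ
  obtain ⟨c, hc⟩ : ∃ c : ℝ≥0, Measure.map e μ = c • volume :=
    ⟨_, Measure.isAddLeftInvariant_eq_smul _ _⟩
  have hμ (S : Set V) : μ S = c * volume (e '' S) :=
    calc μ S = μ (e ⁻¹' (e '' S)) := by rw [e.injective.preimage_image]
      _ = Measure.map e μ (e '' S) := (e.toHomeomorph.toMeasurableEquiv.map_apply _).symm
      _ = c * volume (e '' S) := by rw [hc]; rfl
  calc μ A ^ a * μ B ^ b
      = (c : ℝ≥0∞) ^ a * (c : ℝ≥0∞) ^ b * (volume (e '' A) ^ a * volume (e '' B) ^ b) := by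
        rw [hμ A, hμ B, ENNReal.mul_rpow_of_nonneg _ _ ha.le, ENNReal.mul_rpow_of_nonneg _ _ hb.le,
          mul_mul_mul_comm]
    _ ≤ c * volume (a • e '' A + b • e '' B) := by
        rw [← ENNReal.rpow_add_of_nonneg _ _ ha.le hb.le, hab, ENNReal.rpow_one]
        gcongr
        exact volume_rpow_mul_volume_rpow_le ha hb hab (hA.image e.continuous)
          (hB.image e.continuous)
    _ = μ (a • A + b • B) := by rw [hμ, image_add, image_smul_set, image_smul_set]

theorem addHaar_le_addHaar_closedBall_diam_div_two {A : Set V} (hA : Bornology.IsBounded A) :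
    μ A ≤ μ (closedBall 0 (diam A / 2)) := by
  have hcompact : IsCompact (closure A) := hA.isCompact_closure
  have hhalf : (0 : ℝ) < 1 / 2 := by norm_num
  have hsub : (1 / 2 : ℝ) • closure A + (1 / 2 : ℝ) • -closure A ⊆ closedBall 0 (diam A / 2) := by
    rintro _ ⟨_, ⟨x, hx, rfl⟩, _, ⟨y, hy, rfl⟩, rfl⟩
    have hdist : dist x (-y) ≤ diam A := diam_closure A ▸ dist_le_diam_of_mem hA.closure hx hy
    simp only [mem_closedBall_zero_iff, ← smul_add, norm_smul, Real.norm_of_nonneg hhalf.le]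
    rw [dist_eq_norm, sub_neg_eq_add] at hdist
    linarith
  calc μ A ≤ μ (closure A) := measure_mono subset_closure
    _ = μ (closure A) ^ (1 / 2 : ℝ) * μ (-closure A) ^ (1 / 2 : ℝ) := by
        rw [Measure.measure_neg, ← ENNReal.rpow_add_of_nonneg _ _ hhalf.le hhalf.le, add_halves,
          ENNReal.rpow_one]
    _ ≤ μ ((1 / 2 : ℝ) • closure A + (1 / 2 : ℝ) • -closure A) :=
        addHaar_rpow_mul_addHaar_rpow_le μ hhalf hhalf (add_halves 1) hcompact hcompact.neg
    _ ≤ μ (closedBall 0 (diam A / 2)) := measure_mono hsub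

end IsodiametricInequality

section Shadow

variable {E : Type*} [NormedAddCommGroup E] [InnerProductSpace ℝ E]

/-- The shadow of `S` in the direction `u`: its orthogonal projection to the hyperplane `uᗮ`,
as a set in this hyperplane. -/
def shadow (u : E) (S : Set E) : Set (ℝ ∙ u)ᗮ :=
  (ℝ ∙ u)ᗮ.orthogonalProjectionOnto '' S

lemma shadow_mono (u : E) {S T : Set E} (h : S ⊆ T) : shadow u S ⊆ shadow u T :=
  image_mono h

lemma coe_orthogonalProjectionOnto_span_singleton_orthogonal (u x : E) :
    ((ℝ ∙ u)ᗮ.orthogonalProjectionOnto x : E) = x - (inner ℝ u x / ‖u‖ ^ 2) • u := by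
  rw [Submodule.coe_orthogonalProjectionOnto_apply,
    Submodule.starProjection_orthogonal_val, Submodule.starProjection_singleton]
  simp

lemma sq_norm_orthogonalProjectionOnto_span_singleton_orthogonal {ν : E} (hν : ‖ν‖ = 1) (u : E) :
    ‖(ℝ ∙ ν)ᗮ.orthogonalProjectionOnto u‖ ^ 2 = ‖u‖ ^ 2 - inner ℝ ν u ^ 2 := by
  rw [← Submodule.norm_coe, coe_orthogonalProjectionOnto_span_singleton_orthogonal, hν, one_pow,
    div_one, norm_sub_sq_real, norm_smul, hν, mul_one, Real.norm_eq_abs, sq_abs,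
    real_inner_smul_right, real_inner_comm]
  ring

lemma orthogonalProjectionOnto_eq_iff_exists_add_smul {u x y : E} :
    (ℝ ∙ u)ᗮ.orthogonalProjectionOnto x = (ℝ ∙ u)ᗮ.orthogonalProjectionOnto y ↔
      ∃ t : ℝ, y + t • u = x := by
  rw [← sub_eq_zero, ← map_sub, Submodule.orthogonalProjectionOnto_eq_zero_iff,
    Submodule.orthogonal_orthogonal, Submodule.mem_span_singleton]
  simp only [eq_sub_iff_add_eq']

lemma exists_linearIsometryEquiv_apply_eq {v w : E} (h : ‖v‖ = ‖w‖) :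
    ∃ R : E ≃ₗᵢ[ℝ] E, R v = w :=
  ⟨(ℝ ∙ (v - w))ᗮ.reflection, Submodule.reflection_sub h⟩

variable [FiniteDimensional ℝ E]

lemma normDet_orthogonalProjectionOnto_comp_subtypeL {u ν : E} (hu : u ≠ 0) (hν : ‖ν‖ = 1) :
    ((ℝ ∙ u)ᗮ.orthogonalProjectionOnto ∘L (ℝ ∙ ν)ᗮ.subtypeL).toLinearMap.normDet =
      |inner ℝ ν u| / ‖u‖ := by
  set f := (ℝ ∙ u)ᗮ.orthogonalProjectionOnto ∘L (ℝ ∙ ν)ᗮ.subtypeL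
  set w := (ℝ ∙ ν)ᗮ.orthogonalProjectionOnto u
  have hadjoint : (f.adjoint ∘L f).toLinearMap =
      LinearMap.transvection (-(‖u‖ ^ 2)⁻¹ • innerₛₗ ℝ w) w := by
    ext x : 1
    have hwx : inner ℝ w x = inner ℝ u (x : E) :=
      Submodule.inner_orthogonalProjectionOnto_eq_of_mem_right x u
    calc f.adjoint (f x)
        = (ℝ ∙ ν)ᗮ.orthogonalProjectionOnto ((ℝ ∙ u)ᗮ.orthogonalProjectionOnto (x : E) : E) := by
          rw [ContinuousLinearMap.adjoint_comp, Submodule.adjoint_subtypeL,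
            Submodule.adjoint_orthogonalProjectionOnto]
          rfl
      _ = x - (inner ℝ u (x : E) / ‖u‖ ^ 2) • w := by
          rw [coe_orthogonalProjectionOnto_span_singleton_orthogonal, map_sub, map_smul,
            Submodule.orthogonalProjectionOnto_mem_subspace_eq_self]
      _ = LinearMap.transvection (-(‖u‖ ^ 2)⁻¹ • innerₛₗ ℝ w) w x := by
          rw [LinearMap.transvection.apply, LinearMap.smul_apply, innerₛₗ_apply_apply, hwx,
            neg_smul, neg_smul, smul_eq_mul, sub_eq_add_neg, inv_mul_eq_div]
  have hdet : f.toLinearMap.normDet ^ 2 = (|inner ℝ ν u| / ‖u‖) ^ 2 :=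
    calc f.toLinearMap.normDet ^ 2 = (f.adjoint ∘L f).toLinearMap.det := f.normDet_sq
      _ = 1 - ‖w‖ ^ 2 / ‖u‖ ^ 2 := by
        rw [hadjoint, LinearMap.transvection.det, LinearMap.smul_apply, innerₛₗ_apply_apply,
          real_inner_self_eq_norm_sq, smul_eq_mul]
        ring
      _ = (|inner ℝ ν u| / ‖u‖) ^ 2 := by
        rw [sq_norm_orthogonalProjectionOnto_span_singleton_orthogonal hν, div_pow, sq_abs]
        field_simp
        ring
  exact (sq_eq_sq₀ (LinearMap.normDet_nonneg _) (by positivity)).1 hdet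

variable [MeasurableSpace E] [BorelSpace E]

lemma hausdorffMeasure_shadow_of_subset_hyperplane {n : ℕ} [Fact (Module.finrank ℝ E = n + 1)]
    {u ν : E} (hu : u ≠ 0) (hν : ‖ν‖ = 1) {F : Set E} {b : ℝ} (hF : ∀ x ∈ F, inner ℝ ν x = b) :
    μH[n] (shadow u F) = ENNReal.ofReal (|inner ℝ ν u| / ‖u‖) * μH[n] F := by
  have hrank : Module.finrank ℝ (ℝ ∙ ν)ᗮ = n :=
    Submodule.finrank_orthogonal_span_singleton (norm_ne_zero_iff.1 (hν.symm ▸ one_ne_zero))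
  let P := (ℝ ∙ u)ᗮ.orthogonalProjectionOnto
  let f := P ∘L (ℝ ∙ ν)ᗮ.subtypeL
  let i : (ℝ ∙ ν)ᗮ → E := fun y ↦ b • ν + y
  have hi : Isometry i := (isometry_add_left _).comp (ℝ ∙ ν)ᗮ.subtypeₗᵢ.isometry
  have hiF : i '' (i ⁻¹' F) = F := by
    refine image_preimage_eq_of_subset fun x hx ↦ ⟨(ℝ ∙ ν)ᗮ.orthogonalProjectionOnto x, ?_⟩
    simp only [i, coe_orthogonalProjectionOnto_span_singleton_orthogonal, hν, hF x hx, one_pow,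
      div_one, add_sub_cancel]
  have hshadow : (P (b • ν) + ·) '' (f '' (i ⁻¹' F)) = shadow u F := by
    rw [image_image, shadow, ← hiF, image_image, preimage_image_preimage]
    exact image_congr fun y _ ↦ (map_add P _ _).symm
  calc μH[n] (shadow u F) = μH[n] (f '' (i ⁻¹' F)) := by
        rw [← hshadow, (isometry_add_left _).hausdorffMeasure_image (.inl n.cast_nonneg)]
    _ = ENNReal.ofReal f.toLinearMap.normDet * μH[n] (i ⁻¹' F) :=
        hrank ▸ f.toLinearMap.hausdorffMeasure_image (i ⁻¹' F)
    _ = ENNReal.ofReal (|inner ℝ ν u| / ‖u‖) * μH[n] F := by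
        rw [normDet_orthogonalProjectionOnto_comp_subtypeL hu hν,
          ← hi.hausdorffMeasure_image (.inl n.cast_nonneg), hiF]

lemma addHaar_setOf_inner_eq_zero (μ : Measure E) [μ.IsAddHaarMeasure] {ν : E} (hν : ν ≠ 0) :
    μ {u : E | inner ℝ ν u = (0 : ℝ)} = 0 := by
  have hne : (ℝ ∙ ν)ᗮ ≠ ⊤ := by simpa using hν
  convert Measure.addHaar_submodule μ _ hne using 2
  ext
  simp [Submodule.mem_orthogonal_singleton_iff_inner_right]

variable (E) in
/-- The constant in Crofton's formula: the integral of `|⟪ν, u⟫| / ‖u‖` over the unit ball, which is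
the same for all unit vectors `ν`. Taking the supremum over `ν` avoids choosing one of them. -/
noncomputable def croftonConstant : ℝ≥0∞ :=
  ⨆ ν ∈ sphere (0 : E) 1, ∫⁻ u in ball (0 : E) 1, ENNReal.ofReal (|inner ℝ ν u| / ‖u‖)

lemma lintegral_abs_inner_div_norm_eq {ν ν' : E} (h : ‖ν‖ = ‖ν'‖) :
    ∫⁻ u in ball (0 : E) 1, ENNReal.ofReal (|inner ℝ ν u| / ‖u‖) =
      ∫⁻ u in ball (0 : E) 1, ENNReal.ofReal (|inner ℝ ν' u| / ‖u‖) := by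
  obtain ⟨R, rfl⟩ := exists_linearIsometryEquiv_apply_eq h
  have hball : R ⁻¹' ball (0 : E) 1 = ball 0 1 := by simp
  rw [← R.measurePreserving.setLIntegral_comp_preimage_emb
    R.toMeasurableEquiv.measurableEmbedding (fun u ↦ ENNReal.ofReal (|inner ℝ (R ν) u| / ‖u‖)),
    hball]
  simp only [R.inner_map_map, R.norm_map]

lemma lintegral_abs_inner_div_norm {ν : E} (hν : ‖ν‖ = 1) :
    ∫⁻ u in ball (0 : E) 1, ENNReal.ofReal (|inner ℝ ν u| / ‖u‖) = croftonConstant E := by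
  refine le_antisymm (le_iSup₂_of_le ν (by simpa using hν) le_rfl) (iSup₂_le fun ν' hν' ↦ ?_)
  exact (lintegral_abs_inner_div_norm_eq (hν.trans (mem_sphere_zero_iff_norm.1 hν').symm)).ge

lemma croftonConstant_ne_top : croftonConstant E ≠ ⊤ := by
  refine ne_top_of_le_ne_top (measure_ball_lt_top (μ := volume) (x := (0 : E)) (r := 1)).ne
    (iSup₂_le fun ν hν ↦ ?_)
  rw [← setLIntegral_one]
  refine lintegral_mono fun u ↦ ENNReal.ofReal_le_one.2 (div_le_one_of_le₀ ?_ (norm_nonneg u))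
  simpa [mem_sphere_zero_iff_norm.1 hν] using abs_real_inner_le_norm ν u

lemma croftonConstant_ne_zero [Nontrivial E] : croftonConstant E ≠ 0 := by
  obtain ⟨ν, hν⟩ := exists_norm_eq E (zero_le_one' ℝ)
  have hν0 : ν ≠ 0 := norm_ne_zero_iff.1 (hν.symm ▸ one_ne_zero)
  rw [← lintegral_abs_inner_div_norm hν, ← pos_iff_ne_zero,
    setLIntegral_pos_iff (by fun_prop)]
  refine (measure_ball_pos volume (0 : E) one_pos).trans_le ?_
  rw [← measure_sdiff_null (addHaar_setOf_inner_eq_zero volume hν0)]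
  refine measure_mono fun u ⟨hu, hνu⟩ ↦ ⟨?_, hu⟩
  have hu0 : u ≠ 0 := by rintro rfl; simp at hνu
  have hνu : inner ℝ ν u ≠ 0 := hνu
  simpa using by positivity

end Shadow

section Crofton

lemma count_inter_preimage_singleton_of_injOn {X Y : Type*} [MeasurableSpace X]
    [MeasurableSingletonClass X] {f : X → Y} {S : Set X} (hf : InjOn f S) (y : Y) :
    Measure.count (S ∩ f ⁻¹' {y}) = (f '' S).indicator 1 y := by
  by_cases hy : y ∈ f '' S
  · obtain ⟨x, hx, rfl⟩ := hy
    have hfiber : S ∩ f ⁻¹' {f x} = {x} := by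
      ext z
      exact ⟨fun ⟨hz, hzx⟩ ↦ hf hz hx hzx, by rintro rfl; exact ⟨hx, rfl⟩⟩
    rw [hfiber, Measure.count_singleton, indicator_of_mem (mem_image_of_mem f hx), Pi.one_apply]
  · have hfiber : S ∩ f ⁻¹' {y} = ∅ := by
      rw [eq_empty_iff_forall_notMem]
      exact fun x ⟨hx, hxy⟩ ↦ hy ⟨x, hx, hxy⟩
    rw [hfiber, measure_empty, indicator_of_notMem hy]

variable {E : Type*} [NormedAddCommGroup E] [InnerProductSpace ℝ E]

lemma injOn_orthogonalProjectionOnto_of_subset_hyperplane {u ν : E} (hνu : inner ℝ ν u ≠ 0)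
    {F : Set E} {b : ℝ} (hF : ∀ x ∈ F, inner ℝ ν x = b) :
    InjOn (ℝ ∙ u)ᗮ.orthogonalProjectionOnto F := by
  intro x hx y hy hxy
  obtain ⟨t, rfl⟩ := orthogonalProjectionOnto_eq_iff_exists_add_smul.1 hxy
  have ht := hF _ hx
  rw [inner_add_right, hF y hy, real_inner_smul_right, add_eq_left] at ht
  simp [(mul_eq_zero.1 ht).resolve_right hνu]

variable [FiniteDimensional ℝ E] [MeasurableSpace E] [BorelSpace E] {n : ℕ}
  [Fact (Module.finrank ℝ E = n + 1)] {ι : Type*} [Countable ι] {S : ι → Set E} {ν : ι → E}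
  {b : ι → ℝ}

lemma lintegral_count_inter_fiber_iUnion (hν : ∀ i, ‖ν i‖ = 1) (hSm : ∀ i, MeasurableSet (S i))
    (hSd : Pairwise (Function.onFun Disjoint S)) (hS : ∀ i, ∀ x ∈ S i, inner ℝ (ν i) x = b i)
    {u : E} (hu : ∀ i, inner ℝ (ν i) u ≠ 0) :
    ∫⁻ y, Measure.count ((⋃ i, S i) ∩ (ℝ ∙ u)ᗮ.orthogonalProjectionOnto ⁻¹' {y}) ∂μH[n] =
      ∑' i, ENNReal.ofReal (|inner ℝ (ν i) u| / ‖u‖) * μH[n] (S i) := by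
  let P := (ℝ ∙ u)ᗮ.orthogonalProjectionOnto
  have hinj (i) : InjOn P (S i) := injOn_orthogonalProjectionOnto_of_subset_hyperplane (hu i) (hS i)
  have hshadow (i) : MeasurableSet (shadow u (S i)) :=
    (hSm i).image_of_continuousOn_injOn P.continuous.continuousOn (hinj i)
  have hu0 (i : ι) : u ≠ 0 := by rintro rfl; exact hu i (inner_zero_right _)
  have hcount (y) : Measure.count ((⋃ i, S i) ∩ P ⁻¹' {y}) =
      ∑' i, (shadow u (S i)).indicator (1 : (ℝ ∙ u)ᗮ → ℝ≥0∞) y := by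
    rw [iUnion_inter, measure_iUnion (fun i j hij ↦ (hSd hij).mono inter_subset_left
      inter_subset_left) fun i ↦ (hSm i).inter (P.measurable (measurableSet_singleton y))]
    exact tsum_congr fun i ↦ count_inter_preimage_singleton_of_injOn (hinj i) y
  rw [lintegral_congr hcount,
    lintegral_tsum fun i ↦ (measurable_one.indicator (hshadow i)).aemeasurable]
  refine tsum_congr fun i ↦ ?_
  rw [lintegral_indicator_one (hshadow i),
    hausdorffMeasure_shadow_of_subset_hyperplane (hu0 i) (hν i) (hS i)]

theorem croftonConstant_mul_hausdorffMeasure_iUnion (hν : ∀ i, ‖ν i‖ = 1)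
    (hSm : ∀ i, MeasurableSet (S i)) (hSd : Pairwise (Function.onFun Disjoint S))
    (hS : ∀ i, ∀ x ∈ S i, inner ℝ (ν i) x = b i) :
    croftonConstant E * μH[n] (⋃ i, S i) = ∫⁻ u in ball (0 : E) 1,
      ∫⁻ y, Measure.count ((⋃ i, S i) ∩ (ℝ ∙ u)ᗮ.orthogonalProjectionOnto ⁻¹' {y}) ∂μH[n] := by
  have htransversal : ∀ᵐ u : E, ∀ i, inner ℝ (ν i) u ≠ 0 := ae_all_iff.2 fun i ↦ by
    simpa [ae_iff] using addHaar_setOf_inner_eq_zero volume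
      (norm_ne_zero_iff.1 ((hν i).symm ▸ one_ne_zero))
  calc croftonConstant E * μH[n] (⋃ i, S i)
      = ∑' i, croftonConstant E * μH[n] (S i) := by
        rw [measure_iUnion hSd hSm, ENNReal.tsum_mul_left]
    _ = ∑' i, ∫⁻ u in ball (0 : E) 1, ENNReal.ofReal (|inner ℝ (ν i) u| / ‖u‖) * μH[n] (S i) := by
        refine tsum_congr fun i ↦ ?_
        rw [lintegral_mul_const _ (by fun_prop), lintegral_abs_inner_div_norm (hν i)]
    _ = ∫⁻ u in ball (0 : E) 1, ∑' i, ENNReal.ofReal (|inner ℝ (ν i) u| / ‖u‖) * μH[n] (S i) :=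
        (lintegral_tsum fun i ↦ by fun_prop).symm
    _ = _ := by
        refine lintegral_congr_ae (ae_restrict_of_ae ?_)
        filter_upwards [htransversal] with u hu
        exact (lintegral_count_inter_fiber_iUnion hν hSm hSd hS hu).symm

theorem croftonConstant_mul_hausdorffMeasure {X : Set E} (hX : MeasurableSet X)
    (hν : ∀ i, ‖ν i‖ = 1) (hXν : ∀ x ∈ X, ∃ i, inner ℝ (ν i) x = b i) :
    croftonConstant E * μH[n] X = ∫⁻ u in ball (0 : E) 1,
      ∫⁻ y, Measure.count (X ∩ (ℝ ∙ u)ᗮ.orthogonalProjectionOnto ⁻¹' {y}) ∂μH[n] := by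
  rcases X.eq_empty_or_nonempty with rfl | ⟨x, hx⟩
  · simp
  have : Nonempty ι := ⟨(hXν x hx).choose⟩
  obtain ⟨e, he⟩ := exists_surjective_nat ι
  let H : ℕ → Set E := fun k ↦ X ∩ {x | inner ℝ (ν (e k)) x = b (e k)}
  have hHX : ⋃ k, disjointed H k = X := by
    rw [iUnion_disjointed]
    refine (iUnion_subset fun k ↦ inter_subset_left).antisymm fun x hx ↦ ?_
    obtain ⟨i, hi⟩ := hXν x hx
    obtain ⟨k, rfl⟩ := he i
    exact mem_iUnion.2 ⟨k, hx, hi⟩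
  have hHm (k) : MeasurableSet (H k) :=
    hX.inter (isClosed_eq (by fun_prop) continuous_const).measurableSet
  have hformula := croftonConstant_mul_hausdorffMeasure_iUnion (n := n) (fun k ↦ hν (e k))
    (.disjointed hHm) (disjoint_disjointed H) fun k x hx ↦ (disjointed_subset H k hx).2
  rwa [hHX] at hformula

end Crofton

section Frontier

lemma inter_frontier_nonempty_of_isPreconnected {X : Type*} [TopologicalSpace X] {S U : Set X}
    (hS : IsPreconnected S) (hSU : (S ∩ U).Nonempty) (hSU' : (S ∩ Uᶜ).Nonempty) :
    (S ∩ frontier U).Nonempty := by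
  by_contra hempty
  have hdisjoint (x) (hx : x ∈ S) : x ∉ frontier U := fun hxU ↦ hempty ⟨x, hx, hxU⟩
  obtain ⟨x, -, hxi, hxc⟩ := hS (interior U) (closure U)ᶜ isOpen_interior
    isClosed_closure.isOpen_compl
    (fun x hx ↦ or_iff_not_imp_left.2 fun hxi hxc ↦ hdisjoint x hx ⟨hxc, hxi⟩)
    (hSU.imp fun x hx ↦ ⟨hx.1, by_contra fun hxi ↦ hdisjoint x hx.1 ⟨subset_closure hx.2, hxi⟩⟩)
    (hSU'.imp fun x hx ↦
      ⟨hx.1, fun hxc ↦ hdisjoint x hx.1 ⟨hxc, fun hxi ↦ hx.2 (interior_subset hxi)⟩⟩)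
  exact hxc (interior_subset_closure hxi)

lemma exists_nonneg_add_smul_mem_frontier {E : Type*} [NormedAddCommGroup E] [NormedSpace ℝ E]
    {L : Set E} (hL : Bornology.IsBounded L) {x v : E} (hx : x ∈ closure L) (hv : v ≠ 0) :
    ∃ t : ℝ, 0 ≤ t ∧ x + t • v ∈ frontier L := by
  have hray : IsPreconnected ((fun t : ℝ ↦ x + t • v) '' Ici 0) :=
    isPreconnected_Ici.image _ (by fun_prop)
  obtain ⟨_, ⟨t, ht, rfl⟩, htL⟩ := inter_frontier_nonempty_of_isPreconnected (U := closure L) hray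
    ⟨x, ⟨0, self_mem_Ici, by simp⟩, hx⟩ (by
      obtain ⟨R, hR, hLR⟩ := hL.closure.subset_ball_lt 0 x
      refine ⟨_, ⟨R / ‖v‖, mem_Ici.2 (by positivity), rfl⟩, fun hmem ↦ ?_⟩
      simpa [norm_smul, abs_of_pos hR, norm_ne_zero_iff.2 hv] using hLR hmem)
  exact ⟨t, ht, frontier_closure_subset htL⟩

end Frontier

section Polyhedron

variable {E : Type*} [NormedAddCommGroup E] [InnerProductSpace ℝ E]

/-- The polyhedron cut out by a set `H` of half-spaces, where the pair `(ν, b)` encodes the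
half-space `⟪ν, x⟫ ≤ b`. -/
def polyhedron (H : Set (E × ℝ)) : Set E :=
  {x | ∀ h ∈ H, inner ℝ h.1 x ≤ h.2}

lemma polyhedron_eq_biInter (H : Set (E × ℝ)) :
    polyhedron H = ⋂ h ∈ H, {x | inner ℝ h.1 x ≤ h.2} := by
  ext
  simp [polyhedron]

variable {H : Set (E × ℝ)}

lemma isClosed_polyhedron : IsClosed (polyhedron H) := by
  rw [polyhedron_eq_biInter]
  exact isClosed_biInter fun h _ ↦ isClosed_le (by fun_prop) continuous_const

lemma convex_polyhedron : Convex ℝ (polyhedron H) := by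
  rw [polyhedron_eq_biInter]
  exact convex_iInter₂ fun h _ ↦ convex_halfSpace_le (innerₛₗ ℝ h.1).isLinear h.2

lemma setOf_inner_lt_subset_interior_polyhedron (hH : H.Finite) :
    {x | ∀ h ∈ H, inner ℝ h.1 x < h.2} ⊆ interior (polyhedron H) := by
  refine interior_maximal (fun x hx h hh ↦ (hx h hh).le) ?_
  have heq : {x | ∀ h ∈ H, inner ℝ h.1 x < h.2} = ⋂ h ∈ H, {x | inner ℝ h.1 x < h.2} := by
    ext
    simp
  rw [heq]
  exact hH.isOpen_biInter fun h _ ↦ isOpen_lt (by fun_prop) continuous_const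

lemma exists_inner_eq_of_mem_frontier_polyhedron (hH : H.Finite) {x : E}
    (hx : x ∈ frontier (polyhedron H)) : ∃ h ∈ H, inner ℝ h.1 x = h.2 := by
  by_contra! hne
  exact hx.2 (setOf_inner_lt_subset_interior_polyhedron hH fun h hh ↦
    (isClosed_polyhedron.frontier_subset hx h hh).lt_of_ne (hne h hh))

lemma nonpos_of_add_smul_mem_polyhedron {h : E × ℝ} (hh : h ∈ H) {x u : E} {t : ℝ}
    (hx : inner ℝ h.1 x = h.2) (hu : 0 < inner ℝ h.1 u) (hxt : x + t • u ∈ polyhedron H) :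
    t ≤ 0 := by
  have hle := hxt h hh
  rw [inner_add_right, hx, real_inner_smul_right] at hle
  exact nonpos_of_mul_nonpos_left (by linarith) hu

-- A line enters the polyhedron through a facet with `⟪ν, u⟫ < 0` and leaves it through one with
-- `⟪ν, u⟫ > 0`, and it meets each of these two families in at most one point.
lemma encard_frontier_polyhedron_inter_fiber_le_two (hH : H.Finite) {u : E}
    (hu : ∀ h ∈ H, inner ℝ h.1 u ≠ 0) (y : (ℝ ∙ u)ᗮ) :
    (frontier (polyhedron H) ∩ (ℝ ∙ u)ᗮ.orthogonalProjectionOnto ⁻¹' {y}).encard ≤ 2 := by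
  let fiber := polyhedron H ∩ (ℝ ∙ u)ᗮ.orthogonalProjectionOnto ⁻¹' {y}
  let exit := {x ∈ fiber | ∃ h ∈ H, inner ℝ h.1 x = h.2 ∧ 0 < inner ℝ h.1 u}
  let entry := {x ∈ fiber | ∃ h ∈ H, inner ℝ h.1 x = h.2 ∧ inner ℝ h.1 u < 0}
  have hsub : frontier (polyhedron H) ∩ (ℝ ∙ u)ᗮ.orthogonalProjectionOnto ⁻¹' {y} ⊆
      exit ∪ entry := by
    rintro x ⟨hx, hxy⟩
    have hxfiber : x ∈ fiber := ⟨isClosed_polyhedron.frontier_subset hx, hxy⟩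
    obtain ⟨h, hh, hhx⟩ := exists_inner_eq_of_mem_frontier_polyhedron hH hx
    exact (hu h hh).lt_or_gt.symm.imp (fun hpos ↦ ⟨hxfiber, h, hh, hhx, hpos⟩)
      fun hneg ↦ ⟨hxfiber, h, hh, hhx, hneg⟩
  have hexit : exit.Subsingleton := by
    rintro x ⟨⟨hxP, hxy⟩, h, hh, hhx, hpos⟩ z ⟨⟨hzP, hzy⟩, h', hh', hhz, hpos'⟩
    obtain ⟨t, rfl⟩ := orthogonalProjectionOnto_eq_iff_exists_add_smul.1 (hxy.trans hzy.symm)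
    have ht := nonpos_of_add_smul_mem_polyhedron hh' hhz hpos' hxP
    have ht' := nonpos_of_add_smul_mem_polyhedron (t := -t) hh hhx hpos (by simpa using hzP)
    simp [show t = 0 by linarith]
  have hentry : entry.Subsingleton := by
    rintro x ⟨⟨hxP, hxy⟩, h, hh, hhx, hneg⟩ z ⟨⟨hzP, hzy⟩, h', hh', hhz, hneg'⟩
    obtain ⟨t, rfl⟩ := orthogonalProjectionOnto_eq_iff_exists_add_smul.1 (hxy.trans hzy.symm)
    have ht := nonpos_of_add_smul_mem_polyhedron (u := -u) (t := -t) hh' hhz (by simpa) (by simpa)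
    have ht' := nonpos_of_add_smul_mem_polyhedron (u := -u) (t := t) hh hhx (by simpa)
      (by simpa using hzP)
    simp [show t = 0 by linarith]
  calc _ ≤ (exit ∪ entry).encard := encard_le_encard hsub
    _ ≤ exit.encard + entry.encard := encard_union_le _ _
    _ ≤ 1 + 1 := add_le_add (encard_le_one_iff_subsingleton.2 hexit)
        (encard_le_one_iff_subsingleton.2 hentry)
    _ = 2 := one_add_one_eq_two

lemma two_le_encard_frontier_inter_fiber {L : Set E} (hL : Bornology.IsBounded L) {u : E}
    (hu : u ≠ 0) {y : (ℝ ∙ u)ᗮ} (hy : y ∈ shadow u (interior L)) :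
    2 ≤ (frontier L ∩ (ℝ ∙ u)ᗮ.orthogonalProjectionOnto ⁻¹' {y}).encard := by
  obtain ⟨x, hx, rfl⟩ := hy
  have hxL : x ∈ closure L := interior_subset_closure hx
  obtain ⟨t, ht, htL⟩ := exists_nonneg_add_smul_mem_frontier hL hxL hu
  obtain ⟨s, hs, hsL⟩ := exists_nonneg_add_smul_mem_frontier hL hxL (neg_ne_zero.2 hu)
  rw [smul_neg, ← neg_smul] at hsL
  have hfiber (r : ℝ) : x + r • u ∈ (ℝ ∙ u)ᗮ.orthogonalProjectionOnto ⁻¹'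
      {(ℝ ∙ u)ᗮ.orthogonalProjectionOnto x} :=
    orthogonalProjectionOnto_eq_iff_exists_add_smul.2 ⟨r, rfl⟩
  rw [← one_add_one_eq_two, Order.add_one_le_iff_of_not_isMax (by simp), one_lt_encard_iff]
  refine ⟨_, _, ⟨htL, hfiber t⟩, ⟨hsL, hfiber (-s)⟩, fun heq ↦ ?_⟩
  have hts : t = -s := smul_left_injective ℝ hu (add_left_cancel heq)
  obtain rfl : t = 0 := by linarith
  exact htL.2 (by simpa using hx)

lemma exists_norm_eq_one_inner_lt_lt_inner [CompleteSpace E] {K : Set E} (hK : IsClosed K)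
    (hKc : Convex ℝ K) (hK0 : K.Nonempty) {y : E} (hy : y ∉ K) :
    ∃ ν : E, ∃ b : ℝ, ‖ν‖ = 1 ∧ (∀ k ∈ K, inner ℝ ν k < b) ∧ b < inner ℝ ν y := by
  obtain ⟨f, c, hf, hc⟩ := geometric_hahn_banach_closed_point hKc hK hy
  obtain ⟨w, rfl⟩ := (InnerProductSpace.toDual ℝ E).surjective f
  simp only [InnerProductSpace.toDual_apply_apply] at hf hc
  have hw : 0 < ‖w‖ := by
    rw [norm_pos_iff]
    rintro rfl
    obtain ⟨k, hk⟩ := hK0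
    have hk0 := (hf k hk).trans hc
    simp at hk0
  refine ⟨‖w‖⁻¹ • w, ‖w‖⁻¹ * c, ?_, fun k hk ↦ ?_, ?_⟩
  · rw [norm_smul, norm_inv, norm_norm, inv_mul_cancel₀ hw.ne']
  · rw [real_inner_smul_left]
    exact mul_lt_mul_of_pos_left (hf k hk) (inv_pos.2 hw)
  · rw [real_inner_smul_left]
    exact mul_lt_mul_of_pos_left hc (inv_pos.2 hw)

-- Separate `K` from each point of the compact set `frontier U`; finitely many of the separating
-- half-spaces cut `frontier U` off, and a connected set meeting `K` cannot leave `U` then.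
lemma exists_polyhedron_between [FiniteDimensional ℝ E] {K U : Set E} (hK : IsCompact K)
    (hKc : Convex ℝ K) (hK0 : K.Nonempty) (hU : IsOpen U) (hUb : Bornology.IsBounded U)
    (hKU : K ⊆ U) :
    ∃ H : Set (E × ℝ), H.Finite ∧ (∀ h ∈ H, ‖h.1‖ = 1) ∧ K ⊆ interior (polyhedron H) ∧
      polyhedron H ⊆ U := by
  have := FiniteDimensional.proper_real E
  have := FiniteDimensional.complete ℝ E
  have hsep (y : frontier U) : ∃ h : E × ℝ, ‖h.1‖ = 1 ∧ (∀ k ∈ K, inner ℝ h.1 k < h.2) ∧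
      h.2 < inner ℝ h.1 (y : E) := by
    obtain ⟨ν, b, h⟩ := exists_norm_eq_one_inner_lt_lt_inner hK.isClosed hKc hK0 (y := y) fun hy ↦
      (disjoint_left.1 (disjoint_frontier_iff_isOpen.2 hU) y.2) (hKU hy)
    exact ⟨(ν, b), h⟩
  choose p hp1 hpK hpy using hsep
  have hfrontier : IsCompact (frontier U) :=
    isCompact_of_isClosed_isBounded isClosed_frontier (hUb.closure.subset frontier_subset_closure)
  obtain ⟨s, hs⟩ := hfrontier.elim_finite_subcover (fun y ↦ {z | (p y).2 < inner ℝ (p y).1 z})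
    (fun y ↦ isOpen_lt continuous_const (by fun_prop)) fun y hy ↦ mem_iUnion.2 ⟨⟨y, hy⟩, hpy _⟩
  have hH : (p '' s).Finite := s.finite_toSet.image p
  have hKH : K ⊆ interior (polyhedron (p '' s)) := fun k hk ↦
    setOf_inner_lt_subset_interior_polyhedron hH (forall_mem_image.2 fun y _ ↦ hpK y k hk)
  refine ⟨p '' s, hH, forall_mem_image.2 fun y _ ↦ hp1 y, hKH, fun z hz ↦ ?_⟩
  by_contra hzU
  obtain ⟨k, hk⟩ := hK0
  obtain ⟨y, hyH, hyU⟩ := inter_frontier_nonempty_of_isPreconnected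
    convex_polyhedron.isPreconnected ⟨k, interior_subset (hKH hk), hKU hk⟩ ⟨z, hz, hzU⟩
  obtain ⟨i, hi, hyi⟩ := mem_iUnion₂.1 (hs hyU)
  exact (hyH (p i) (mem_image_of_mem p hi)).not_gt hyi

end Polyhedron

section Monotonicity

variable {E : Type*} [NormedAddCommGroup E] [InnerProductSpace ℝ E] {X Y : Set E}

lemma antilipschitzWith_one_of_inner_le {f : X → E}
    (hf : ∀ x z : X, inner ℝ (f x - x) ((z : E) - x) ≤ 0) : AntilipschitzWith 1 f := by
  refine AntilipschitzWith.of_le_mul_dist fun x y ↦ ?_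
  rw [NNReal.coe_one, one_mul, Subtype.dist_eq, dist_eq_norm, dist_eq_norm]
  rcases (norm_nonneg ((x : E) - y)).eq_or_lt with hxy | hxy
  · rw [← hxy]
    positivity
  refine le_of_mul_le_mul_right ?_ hxy
  calc ‖(x : E) - y‖ * ‖(x : E) - y‖
      ≤ ‖(x : E) - y‖ * ‖(x : E) - y‖ - inner ℝ (f x - x) ((y : E) - x)
          - inner ℝ (f y - y) ((x : E) - y) := by linarith [hf x y, hf y x]
    _ = inner ℝ (f x - f y) ((x : E) - y) := by
        rw [← real_inner_self_eq_norm_mul_norm, ← neg_sub (x : E) y, inner_neg_right,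
          sub_neg_eq_add, ← inner_add_left, ← inner_sub_left]
        congr 1
        abel
    _ ≤ ‖f x - f y‖ * ‖(x : E) - y‖ := real_inner_le_norm _ _

lemma exists_supporting_normal [CompleteSpace E] {K : Set E} (hK : Convex ℝ K)
    (hK0 : (interior K).Nonempty) {x : E} (hx : x ∉ interior K) :
    ∃ w : E, w ≠ 0 ∧ ∀ z ∈ closure K, inner ℝ w (z - x) ≤ 0 := by
  obtain ⟨f, hf⟩ := geometric_hahn_banach_open_point hK.interior isOpen_interior hx
  obtain ⟨w, rfl⟩ := (InnerProductSpace.toDual ℝ E).surjective f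
  simp only [InnerProductSpace.toDual_apply_apply] at hf
  refine ⟨w, ?_, fun z hz ↦ ?_⟩
  · rintro rfl
    obtain ⟨k, hk⟩ := hK0
    have hkx := hf k hk
    simp at hkx
  · rw [← hK.closure_interior_eq_closure_of_nonempty_interior hK0] at hz
    rw [inner_sub_right, sub_nonpos]
    exact closure_minimal (fun y hy ↦ (hf y hy).le)
      (isClosed_le (innerSL ℝ w).continuous continuous_const) hz

variable [MeasurableSpace E] [BorelSpace E]

lemma hausdorffMeasure_le_of_normal_translate {d : ℝ} (hd : 0 ≤ d)
    (h : ∀ x ∈ X, ∃ y ∈ Y, ∀ z ∈ X, inner ℝ (y - x) (z - x) ≤ 0) : μH[d] X ≤ μH[d] Y := by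
  choose f hfY hf using fun x : X ↦ h x x.2
  have hanti : AntilipschitzWith 1 f := antilipschitzWith_one_of_inner_le fun x z ↦ hf x z z.2
  calc μH[d] X = μH[d] (univ : Set X) := by
        rw [← (isometry_subtype_coe (s := X)).hausdorffMeasure_image (Or.inl hd), image_univ,
          Subtype.range_coe]
    _ ≤ μH[d] (f '' univ) := by simpa using hanti.le_hausdorffMeasure_image hd univ
    _ ≤ μH[d] Y := measure_mono (image_subset_iff.2 fun x _ ↦ hfY x)

theorem hausdorffMeasure_frontier_mono [CompleteSpace E] {K L : Set E} (hK : Convex ℝ K)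
    (hK0 : (interior K).Nonempty) (hKL : K ⊆ L) (hL : Bornology.IsBounded L) {d : ℝ}
    (hd : 0 ≤ d) : μH[d] (frontier K) ≤ μH[d] (frontier L) := by
  refine hausdorffMeasure_le_of_normal_translate hd fun x hx ↦ ?_
  obtain ⟨w, hw, hwK⟩ := exists_supporting_normal hK hK0 hx.2
  obtain ⟨t, ht, htL⟩ := exists_nonneg_add_smul_mem_frontier hL (closure_mono hKL hx.1) hw
  refine ⟨x + t • w, htL, fun z hz ↦ ?_⟩
  rw [add_sub_cancel_left, real_inner_smul_left]
  exact mul_nonpos_of_nonneg_of_nonpos ht (hwK z hz.1)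

end Monotonicity

section Cauchy

lemma le_of_forall_one_lt_le_ofReal_pow_mul {a b : ℝ≥0∞} {n : ℕ}
    (h : ∀ t : ℝ, 1 < t → a ≤ ENNReal.ofReal t ^ n * b) : a ≤ b := by
  have hlim : Tendsto (fun t : ℝ ↦ ENNReal.ofReal t ^ n * b) (nhdsWithin 1 (Ioi 1))
      (nhds (ENNReal.ofReal 1 ^ n * b)) :=
    ENNReal.Tendsto.mul_const (ENNReal.Tendsto.pow
      ((ENNReal.continuous_ofReal.tendsto 1).mono_left nhdsWithin_le_nhds)) (Or.inl (by simp))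
  rw [ENNReal.ofReal_one, one_pow, one_mul] at hlim
  exact ge_of_tendsto hlim (eventually_mem_nhdsWithin.mono h)

lemma homothety_inv_apply_homothety_apply {k V P : Type*} [Field k] [AddCommGroup V] [Module k V]
    [AddTorsor V P] (x : P) {t : k} (ht : t ≠ 0) (y : P) :
    AffineMap.homothety x t⁻¹ (AffineMap.homothety x t y) = y := by
  rw [← AffineMap.homothety_mul_apply, inv_mul_cancel₀ ht, AffineMap.homothety_one,
    AffineMap.id_apply]

variable {E : Type*} [NormedAddCommGroup E] [InnerProductSpace ℝ E]

lemma shadow_image_homothety (u x : E) (t : ℝ) (S : Set E) :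
    shadow u (AffineMap.homothety x t '' S) =
      AffineMap.homothety ((ℝ ∙ u)ᗮ.orthogonalProjectionOnto x) t '' shadow u S := by
  simp only [shadow, image_image, AffineMap.homothety_apply, vsub_eq_sub, vadd_eq_add, map_add,
    map_smul, map_sub]

lemma isOpen_shadow [FiniteDimensional ℝ E] (u : E) {S : Set E} (hS : IsOpen S) :
    IsOpen (shadow u S) :=
  LinearMap.isOpenMap_of_finiteDimensional (ℝ ∙ u)ᗮ.orthogonalProjectionOnto.toLinearMap
    (fun y ↦ ⟨y, (ℝ ∙ u)ᗮ.orthogonalProjectionOnto_mem_subspace_eq_self y⟩) S hS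

variable [MeasurableSpace E] [BorelSpace E] {n : ℕ}

lemma hausdorffMeasure_shadow_image_homothety (u x : E) {t : ℝ} (ht : 0 < t) (S : Set E) :
    μH[n] (shadow u (AffineMap.homothety x t '' S)) =
      ENNReal.ofReal t ^ n * μH[n] (shadow u S) := by
  rw [shadow_image_homothety, hausdorffMeasure_homothety_image n.cast_nonneg _ ht.ne',
    ENNReal.smul_def, smul_eq_mul, NNReal.rpow_natCast, ENNReal.coe_pow, ← enorm_eq_nnnorm,
    Real.enorm_of_nonneg ht.le]

variable [FiniteDimensional ℝ E]

lemma lintegral_shadow_image_homothety (x : E) {t : ℝ} (ht : 0 < t) (S : Set E) :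
    ∫⁻ u in ball (0 : E) 1, 2 * μH[n] (shadow u (AffineMap.homothety x t '' S)) =
      ENNReal.ofReal t ^ n * ∫⁻ u in ball (0 : E) 1, 2 * μH[n] (shadow u S) := by
  rw [← lintegral_const_mul' _ _ (by finiteness)]
  simp only [hausdorffMeasure_shadow_image_homothety _ x ht, mul_left_comm]

variable [Fact (Module.finrank ℝ E = n + 1)]

lemma croftonConstant_mul_hausdorffMeasure_frontier_polyhedron {H : Set (E × ℝ)} (hH : H.Finite)
    (hH1 : ∀ h ∈ H, ‖h.1‖ = 1) :
    croftonConstant E * μH[n] (frontier (polyhedron H)) = ∫⁻ u in ball (0 : E) 1,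
      ∫⁻ y, Measure.count (frontier (polyhedron H) ∩
        (ℝ ∙ u)ᗮ.orthogonalProjectionOnto ⁻¹' {y}) ∂μH[n] :=
  have := hH.countable.to_subtype
  croftonConstant_mul_hausdorffMeasure (ν := fun h : H ↦ h.1.1) (b := fun h : H ↦ h.1.2)
    isClosed_frontier.measurableSet (fun h ↦ hH1 h h.2) fun _ hx ↦
      let ⟨h, hh, hhx⟩ := exists_inner_eq_of_mem_frontier_polyhedron hH hx
      ⟨⟨h, hh⟩, hhx⟩

lemma count_frontier_inter_fiber (L : Set E) (u : E) (y : (ℝ ∙ u)ᗮ) :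
    Measure.count (frontier L ∩ (ℝ ∙ u)ᗮ.orthogonalProjectionOnto ⁻¹' {y}) =
      (frontier L ∩ (ℝ ∙ u)ᗮ.orthogonalProjectionOnto ⁻¹' {y}).encard :=
  Measure.count_apply (isClosed_frontier.measurableSet.inter
    ((ℝ ∙ u)ᗮ.orthogonalProjectionOnto.measurable (measurableSet_singleton y)))

lemma croftonConstant_mul_hausdorffMeasure_frontier_polyhedron_le {H : Set (E × ℝ)}
    (hH : H.Finite) (hH1 : ∀ h ∈ H, ‖h.1‖ = 1) :
    croftonConstant E * μH[n] (frontier (polyhedron H)) ≤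
      ∫⁻ u in ball (0 : E) 1, 2 * μH[n] (shadow u (polyhedron H)) := by
  rw [croftonConstant_mul_hausdorffMeasure_frontier_polyhedron hH hH1]
  have htransversal : ∀ᵐ u : E, ∀ h ∈ H, inner ℝ h.1 u ≠ 0 :=
    (ae_ball_iff hH.countable).2 fun h hh ↦ by
      simpa [ae_iff] using addHaar_setOf_inner_eq_zero volume
        (norm_ne_zero_iff.1 ((hH1 h hh).symm ▸ one_ne_zero))
  refine lintegral_mono_ae (ae_restrict_of_ae (htransversal.mono fun u hu ↦ ?_))
  refine le_trans (lintegral_mono fun y ↦ ?_) (lintegral_indicator_const_le _ 2)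
  rw [count_frontier_inter_fiber]
  by_cases hy : y ∈ shadow u (polyhedron H)
  · rw [indicator_of_mem hy]
    simpa using ENat.toENNReal_mono (encard_frontier_polyhedron_inter_fiber_le_two hH hu y)
  · have hempty : frontier (polyhedron H) ∩ (ℝ ∙ u)ᗮ.orthogonalProjectionOnto ⁻¹' {y} = ∅ :=
      eq_empty_of_forall_notMem fun x hx ↦ hy ⟨x, isClosed_polyhedron.frontier_subset hx.1, hx.2⟩
    simp [hempty]

lemma lintegral_shadow_interior_polyhedron_le {H : Set (E × ℝ)} (hH : H.Finite)
    (hH1 : ∀ h ∈ H, ‖h.1‖ = 1) (hHb : Bornology.IsBounded (polyhedron H)) :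
    ∫⁻ u in ball (0 : E) 1, 2 * μH[n] (shadow u (interior (polyhedron H))) ≤
      croftonConstant E * μH[n] (frontier (polyhedron H)) := by
  have : Nontrivial E := Module.nontrivial_of_finrank_eq_succ (R := ℝ)
    (Fact.out (p := Module.finrank ℝ E = n + 1))
  rw [croftonConstant_mul_hausdorffMeasure_frontier_polyhedron hH hH1]
  refine lintegral_mono_ae (ae_restrict_of_ae ((Measure.ae_ne volume 0).mono fun u hu ↦ ?_))
  rw [← lintegral_indicator_const (isOpen_shadow u isOpen_interior).measurableSet]
  refine lintegral_mono (indicator_le fun y hy ↦ ?_)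
  rw [count_frontier_inter_fiber]
  simpa using ENat.toENNReal_mono (two_le_encard_frontier_inter_fiber hHb hu hy)

variable {K : Set E}

lemma croftonConstant_mul_hausdorffMeasure_frontier_le (hK : Convex ℝ K)
    (hK0 : (interior K).Nonempty) (hKb : Bornology.IsBounded K) :
    croftonConstant E * μH[n] (frontier K) ≤
      ∫⁻ u in ball (0 : E) 1, 2 * μH[n] (shadow u K) := by
  refine le_of_forall_one_lt_le_ofReal_pow_mul (n := n) fun t ht ↦ ?_
  have := FiniteDimensional.proper_real E
  have := FiniteDimensional.complete ℝ E
  obtain ⟨x, hx⟩ := hK0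
  have hdilate : Bornology.IsBounded (AffineMap.homothety x t '' K) :=
    (hKb.isCompact_closure.image (AffineMap.homothety_continuous x t)).isBounded.subset
      (image_mono subset_closure)
  obtain ⟨H, hH, hH1, hKH, hHK⟩ := exists_polyhedron_between hKb.isCompact_closure hK.closure
    ⟨x, interior_subset_closure hx⟩ isOpen_interior (hdilate.subset interior_subset)
    (hK.closure_subset_interior_image_homothety_of_one_lt hx t ht)
  calc croftonConstant E * μH[n] (frontier K)
      ≤ croftonConstant E * μH[n] (frontier (polyhedron H)) := by
        refine mul_le_mul_right (hausdorffMeasure_frontier_mono hK ⟨x, hx⟩ ?_ ?_ n.cast_nonneg) _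
        · exact (subset_closure.trans hKH).trans interior_subset
        · exact hdilate.subset (hHK.trans interior_subset)
    _ ≤ ∫⁻ u in ball (0 : E) 1, 2 * μH[n] (shadow u (polyhedron H)) :=
        croftonConstant_mul_hausdorffMeasure_frontier_polyhedron_le hH hH1
    _ ≤ ∫⁻ u in ball (0 : E) 1, 2 * μH[n] (shadow u (AffineMap.homothety x t '' K)) := by
        gcongr with u
        exact shadow_mono u (hHK.trans interior_subset)
    _ = ENNReal.ofReal t ^ n * ∫⁻ u in ball (0 : E) 1, 2 * μH[n] (shadow u K) :=
        lintegral_shadow_image_homothety x (one_pos.trans ht) K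

lemma lintegral_shadow_le_croftonConstant_mul_hausdorffMeasure_frontier (hK : Convex ℝ K)
    (hK0 : (interior K).Nonempty) (hKb : Bornology.IsBounded K) :
    ∫⁻ u in ball (0 : E) 1, 2 * μH[n] (shadow u K) ≤
      croftonConstant E * μH[n] (frontier K) := by
  refine le_of_forall_one_lt_le_ofReal_pow_mul (n := n) fun t ht ↦ ?_
  have := FiniteDimensional.proper_real E
  have := FiniteDimensional.complete ℝ E
  obtain ⟨x, hx⟩ := hK0
  have ht0 : t ≠ 0 := (one_pos.trans ht).ne'
  obtain ⟨H, hH, hH1, hKH, hHK⟩ := exists_polyhedron_between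
    (hKb.isCompact_closure.image (AffineMap.homothety_continuous x t⁻¹)) (hK.closure.affine_image _)
    (Nonempty.image _ ⟨x, interior_subset_closure hx⟩) isOpen_interior (hKb.subset interior_subset)
    (image_subset_iff.2 fun y hy ↦ by
      obtain ⟨z, hz, rfl⟩ := hK.closure_subset_image_homothety_interior_of_one_lt hx t ht hy
      rwa [mem_preimage, homothety_inv_apply_homothety_apply x ht0])
  have hHK : polyhedron H ⊆ K := hHK.trans interior_subset
  calc ∫⁻ u in ball (0 : E) 1, 2 * μH[n] (shadow u K)
      ≤ ∫⁻ u in ball (0 : E) 1,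
          2 * μH[n] (shadow u (AffineMap.homothety x t '' interior (polyhedron H))) := by
        gcongr with u
        exact shadow_mono u fun y hy ↦
          ⟨_, hKH (mem_image_of_mem _ (subset_closure hy)),
            by simpa using homothety_inv_apply_homothety_apply x (inv_ne_zero ht0) y⟩
    _ = ENNReal.ofReal t ^ n *
          ∫⁻ u in ball (0 : E) 1, 2 * μH[n] (shadow u (interior (polyhedron H))) :=
        lintegral_shadow_image_homothety x (one_pos.trans ht) _
    _ ≤ ENNReal.ofReal t ^ n * (croftonConstant E * μH[n] (frontier (polyhedron H))) := by
        gcongr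
        exact lintegral_shadow_interior_polyhedron_le hH hH1 (hKb.subset hHK)
    _ ≤ ENNReal.ofReal t ^ n * (croftonConstant E * μH[n] (frontier K)) := by
        refine mul_le_mul_right (mul_le_mul_right
          (hausdorffMeasure_frontier_mono convex_polyhedron ?_ hHK hKb n.cast_nonneg) _) _
        exact (Nonempty.image _ ⟨x, interior_subset_closure hx⟩).mono hKH

theorem croftonConstant_mul_hausdorffMeasure_frontier (hK : Convex ℝ K)
    (hK0 : (interior K).Nonempty) (hKb : Bornology.IsBounded K) :
    croftonConstant E * μH[n] (frontier K) =
      ∫⁻ u in ball (0 : E) 1, 2 * μH[n] (shadow u K) :=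
  (croftonConstant_mul_hausdorffMeasure_frontier_le hK hK0 hKb).antisymm
    (lintegral_shadow_le_croftonConstant_mul_hausdorffMeasure_frontier hK hK0 hKb)

end Cauchy

section RosenthalSzasz

variable {E : Type*} [NormedAddCommGroup E] [InnerProductSpace ℝ E]

lemma exists_norm_eq_one_inner_eq_of_interior_eq_empty [FiniteDimensional ℝ E] {K : Set E}
    (hK : Convex ℝ K) (hK0 : K.Nonempty) (hKi : interior K = ∅) :
    ∃ (ν : E) (b : ℝ), ‖ν‖ = 1 ∧ ∀ x ∈ K, inner ℝ ν x = b := by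
  obtain ⟨x₀, hx₀⟩ := hK0
  have hspan : affineSpan ℝ K ≠ ⊤ := fun htop ↦
    (hK.interior_nonempty_iff_affineSpan_eq_top.2 htop).ne_empty hKi
  have hdirection : (affineSpan ℝ K).directionᗮ ≠ ⊥ := by
    rwa [Ne, Submodule.orthogonal_eq_bot_iff,
      AffineSubspace.direction_eq_top_iff_of_nonempty ⟨x₀, subset_affineSpan ℝ K hx₀⟩]
  have : Nontrivial (affineSpan ℝ K).directionᗮ := Submodule.nontrivial_iff_ne_bot.2 hdirection
  obtain ⟨ν, hν⟩ := exists_norm_eq (affineSpan ℝ K).directionᗮ (zero_le_one' ℝ)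
  refine ⟨ν, inner ℝ (ν : E) x₀, hν, fun x hx ↦ ?_⟩
  rw [← sub_eq_zero, ← inner_sub_right]
  exact Submodule.inner_left_of_mem_orthogonal (AffineSubspace.vsub_mem_direction
    (subset_affineSpan ℝ K hx) (subset_affineSpan ℝ K hx₀)) ν.2

variable [MeasurableSpace E] [BorelSpace E]

lemma hausdorffMeasure_shadow_le_hausdorffMeasure_frontier {L : Set E}
    (hL : Bornology.IsBounded L) {u : E} (hu : u ≠ 0) {d : ℝ} (hd : 0 ≤ d) :
    μH[d] (shadow u L) ≤ μH[d] (frontier L) := by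
  have hsub : shadow u L ⊆ shadow u (frontier L) := by
    rintro _ ⟨x, hx, rfl⟩
    obtain ⟨t, -, ht⟩ := exists_nonneg_add_smul_mem_frontier hL (subset_closure hx) hu
    exact ⟨_, ht, orthogonalProjectionOnto_eq_iff_exists_add_smul.2 ⟨t, rfl⟩⟩
  exact (measure_mono hsub).trans (hausdorffMeasure_orthogonalProjectionOnto_le _ d _ hd)

variable [FiniteDimensional ℝ E] {n : ℕ} [Fact (Module.finrank ℝ E = n + 1)] {S : Set E}

lemma hausdorffMeasure_shadow_le (hS : Bornology.IsBounded S) {u : E} (hu : u ≠ 0) :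
    μH[n] (shadow u S) ≤
      ENNReal.ofReal ((diam S / 2) ^ n) * μH[n] (shadow u (ball (0 : E) 1)) := by
  have hrank : Module.finrank ℝ (ℝ ∙ u)ᗮ = n := Submodule.finrank_orthogonal_span_singleton hu
  have : (μH[n] : Measure (ℝ ∙ u)ᗮ).IsAddHaarMeasure := hrank ▸ isAddHaarMeasure_hausdorffMeasure
  have hlip : LipschitzWith 1 (ℝ ∙ u)ᗮ.orthogonalProjectionOnto :=
    (ℝ ∙ u)ᗮ.lipschitzWith_orthogonalProjectionOnto
  have hdiam : diam (shadow u S) ≤ diam S := by simpa [shadow] using hlip.diam_image_le S hS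
  have hball : ball 0 1 ⊆ shadow u (ball (0 : E) 1) := fun y hy ↦
    ⟨y, by simpa using hy, Submodule.orthogonalProjectionOnto_mem_subspace_eq_self y⟩
  calc μH[n] (shadow u S) ≤ μH[n] (closedBall (0 : (ℝ ∙ u)ᗮ) (diam (shadow u S) / 2)) :=
        addHaar_le_addHaar_closedBall_diam_div_two _ (hlip.isBounded_image hS)
    _ ≤ μH[n] (closedBall (0 : (ℝ ∙ u)ᗮ) (diam S / 2)) := by gcongr
    _ = ENNReal.ofReal ((diam S / 2) ^ n) * μH[n] (ball (0 : (ℝ ∙ u)ᗮ) 1) := by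
        rw [Measure.addHaar_closedBall _ _ (by positivity), hrank]
    _ ≤ ENNReal.ofReal ((diam S / 2) ^ n) * μH[n] (shadow u (ball (0 : E) 1)) := by gcongr

variable {K : Set E}

lemma hausdorffMeasure_frontier_le_of_nonempty_interior (hK : Convex ℝ K)
    (hK0 : (interior K).Nonempty) (hKb : Bornology.IsBounded K) :
    μH[n] (frontier K) ≤ ENNReal.ofReal ((diam K / 2) ^ n) * μH[n] (frontier (ball (0 : E) 1)) := by
  have : Nontrivial E := Module.nontrivial_of_finrank_eq_succ (R := ℝ)
    (Fact.out (p := Module.finrank ℝ E = n + 1))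
  set c := ENNReal.ofReal ((diam K / 2) ^ n)
  rw [← ENNReal.mul_le_mul_iff_right (croftonConstant_ne_zero (E := E)) croftonConstant_ne_top]
  calc croftonConstant E * μH[n] (frontier K)
      = ∫⁻ u in ball (0 : E) 1, 2 * μH[n] (shadow u K) :=
        croftonConstant_mul_hausdorffMeasure_frontier hK hK0 hKb
    _ ≤ ∫⁻ u in ball (0 : E) 1, c * (2 * μH[n] (shadow u (ball (0 : E) 1))) := by
        refine lintegral_mono_ae (ae_restrict_of_ae ((Measure.ae_ne volume 0).mono fun u hu ↦ ?_))
        rw [mul_left_comm]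
        gcongr
        exact hausdorffMeasure_shadow_le hKb hu
    _ = c * (croftonConstant E * μH[n] (frontier (ball (0 : E) 1))) := by
        rw [lintegral_const_mul' _ _ ENNReal.ofReal_ne_top,
          croftonConstant_mul_hausdorffMeasure_frontier (convex_ball 0 1)
            (by simp [isOpen_ball.interior_eq]) isBounded_ball]
    _ = croftonConstant E * (c * μH[n] (frontier (ball (0 : E) 1))) := mul_left_comm ..

lemma hausdorffMeasure_frontier_le_of_subset_hyperplane (hKb : Bornology.IsBounded K) {ν : E}
    (hν : ‖ν‖ = 1) {b : ℝ} (hKν : ∀ x ∈ K, inner ℝ ν x = b) :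
    μH[n] (frontier K) ≤ ENNReal.ofReal ((diam K / 2) ^ n) * μH[n] (frontier (ball (0 : E) 1)) := by
  have hν0 : ν ≠ 0 := norm_ne_zero_iff.1 (hν.symm ▸ one_ne_zero)
  have hclosure : ∀ x ∈ closure K, inner ℝ ν x = b :=
    closure_minimal hKν (isClosed_eq (innerSL ℝ ν).continuous continuous_const)
  calc μH[n] (frontier K) ≤ μH[n] (closure K) := measure_mono frontier_subset_closure
    _ = μH[n] (shadow ν (closure K)) := by
        simp [hausdorffMeasure_shadow_of_subset_hyperplane hν0 hν hclosure, hν]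
    _ ≤ ENNReal.ofReal ((diam K / 2) ^ n) * μH[n] (shadow ν (ball (0 : E) 1)) := by
        simpa only [diam_closure] using hausdorffMeasure_shadow_le hKb.closure hν0
    _ ≤ ENNReal.ofReal ((diam K / 2) ^ n) * μH[n] (frontier (ball (0 : E) 1)) :=
        mul_le_mul_right (hausdorffMeasure_shadow_le_hausdorffMeasure_frontier isBounded_ball hν0
          n.cast_nonneg) _

theorem rosenthal_szasz_perimeter_general (hK : Convex ℝ K) (hKb : Bornology.IsBounded K) :
    μH[n] (frontier K) ≤ μH[n] (sphere (0 : E) 1) * ENNReal.ofReal (diam K ^ n / 2 ^ n) ∧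
      (μH[n] (frontier (ball (0 : E) 1))).toReal / diam (ball (0 : E) 1) ^ n =
        (μH[n] (sphere (0 : E) 1)).toReal / 2 ^ n := by
  have : Nontrivial E := Module.nontrivial_of_finrank_eq_succ (R := ℝ)
    (Fact.out (p := Module.finrank ℝ E = n + 1))
  refine ⟨?_, by rw [frontier_ball _ one_ne_zero, diam_ball_eq _ zero_le_one, mul_one]⟩
  rw [mul_comm, ← div_pow, ← frontier_ball (0 : E) one_ne_zero]
  rcases K.eq_empty_or_nonempty with rfl | hK0
  · simp
  rcases (interior K).eq_empty_or_nonempty with hKi | hKi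
  · obtain ⟨ν, b, hν, hKν⟩ := exists_norm_eq_one_inner_eq_of_interior_eq_empty hK hK0 hKi
    exact hausdorffMeasure_frontier_le_of_subset_hyperplane hKb hν hKν
  · exact hausdorffMeasure_frontier_le_of_nonempty_interior hK hKi hKb

end RosenthalSzasz

/-- Rosenthal-Szász type isodiametric inequality for the perimeter of bounded convex sets:
`|∂Ω| ≤ |𝕊^n| diam(Ω)^n / 2^n`, with equality for the unit ball. -/
theorem rosenthal_szasz_perimeter
    (n : ℕ) (hn : 1 ≤ n)
    (Ω : Set (EuclideanSpace ℝ (Fin (n+1))))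
    (hΩo : IsOpen Ω) (hΩc : Convex ℝ Ω) (hΩb : Bornology.IsBounded Ω) :
    μH[(n:ℝ)] (frontier Ω)
      ≤ μH[(n:ℝ)] (sphere (0 : EuclideanSpace ℝ (Fin (n+1))) 1) *
          ENNReal.ofReal (Metric.diam Ω ^ n / 2 ^ n)
    ∧ (μH[(n:ℝ)] (frontier (ball (0 : EuclideanSpace ℝ (Fin (n+1))) 1))).toReal
        / Metric.diam (ball (0 : EuclideanSpace ℝ (Fin (n+1))) 1) ^ n
      = (μH[(n:ℝ)] (sphere (0 : EuclideanSpace ℝ (Fin (n+1))) 1)).toReal / 2 ^ n :=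
  have : Fact (Module.finrank ℝ (EuclideanSpace ℝ (Fin (n + 1))) = n + 1) := ⟨by simp⟩
  rosenthal_szasz_perimeter_general hΩc hΩb
end

section
/- Let n ≥ 1 be an integer, let α ∈ (0,1), s ∈ (0,1), p ≥ 1 with n > sp, and let Ω ⊂ ℝ^{n+1} be an open convex set. Let u : ∂Ω → ℝ be a bounded, non-negative, μH[n]-measurable function with compact support, and for i ∈ ℤ set a_i := |{x ∈ ∂Ω : u(x) > 2^i}|. Then there exists a constant c > 0, depending only on n, α, s, and p, such that (1/2) ∫_{∂Ω} ∫_{∂Ω} |u(x) − u(y)|^p / |x − y|^{n+sp} dx dy + ∫_{∂Ω} H_α(x)^{sp/α} u(x)^p dx ≥ c · Σ_{i∈ℤ, a_{i−1} ≠ 0} 2^{pi} a_{i−1}^{−sp/n} a_i, where the left-hand side is taken in [0, +∞]. -/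
open MeasureTheory Set Filter Metric
open scoped ENNReal NNReal

/-- The truncated integral defining the fractional `α`-mean curvature of `Ω` at `x`. -/
noncomputable def fracMCIntegral (n : ℕ) (α : ℝ) (Ω : Set (EuclideanSpace ℝ (Fin (n+1))))
    (x : EuclideanSpace ℝ (Fin (n+1))) (ε : ℝ) : ℝ :=
  (α/2) * ∫ y in {y : EuclideanSpace ℝ (Fin (n+1)) | ε < dist y x},
      ((Ωᶜ.indicator (fun _ => (1:ℝ)) y) - (Ω.indicator (fun _ => (1:ℝ)) y))
        * (dist y x) ^ (-((n:ℝ)+1+α)) ∂volume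

/-- `h` is the fractional `α`-mean curvature of `Ω` at `x` (principal value limit). -/
def IsFracMeanCurv (n : ℕ) (α : ℝ) (Ω : Set (EuclideanSpace ℝ (Fin (n+1))))
    (x : EuclideanSpace ℝ (Fin (n+1))) (h : ℝ) : Prop :=
  Filter.Tendsto (fracMCIntegral n α Ω x) (nhdsWithin 0 (Set.Ioi 0)) (nhds h)

/-!
Fix `i`, let `x ∈ ∂Ω` with `u x > 2^i`, put `E = {u > 2^(i-1)}`, and choose `R` so that `R^n` is a
large multiple of `|E|`. If `Ω` fills at least a quarter of the ball `B(x, R)`, then projecting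
`Ω ∩ B(x, R)` along the normal of a supporting hyperplane at `x` shows that `∂Ω ∩ B(x, R)` has
measure at least `2 |E|`, so that `∫_{∂Ω ∖ E} |x - y|^{-(n+sp)} dy ≥ c R^{-sp}`. Otherwise at least
half of `B(x, R)` consists of points outside `Ω` whose reflection through `x` is also outside `Ω`;
convexity makes the reflection of `Ω` cancel against part of the complement, so only these points
contribute to the principal value and `H_α(x) ≥ c R^{-α}`. In both cases
`|E|^{-sp/n} ≤ C (∫_{∂Ω ∖ E} |x - y|^{-(n+sp)} dy + H_α(x)^{sp/α})`.
Integrate over `{u > 2^i}`, multiply by `2^{pi}` and sum over `i`: for fixed `x`, `y` the indices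
with `u y ≤ 2^(i-1)` and `2^i < u x` satisfy `2^i ≤ 2 |u x - u y|`, so both sums over `i` are
geometric series dominated by their largest term.
-/

theorem tsum_lintegral_le_lintegral_tsum {X ι : Type*} [MeasurableSpace X] (μ : Measure X)
    (f : ι → X → ℝ≥0∞) : ∑' i, ∫⁻ x, f i x ∂μ ≤ ∫⁻ x, ∑' i, f i x ∂μ := by
  classical
  have sum_le (t : Finset ι) : ∑ i ∈ t, ∫⁻ x, f i x ∂μ ≤ ∫⁻ x, ∑ i ∈ t, f i x ∂μ := by
    induction t using Finset.induction_on with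
    | empty => simp
    | insert a t ha ih =>
      simp only [Finset.sum_insert ha]
      exact (add_le_add_right ih _).trans (le_lintegral_add _ _)
  rw [ENNReal.tsum_eq_iSup_sum]
  exact iSup_le fun t => (sum_le t).trans (lintegral_mono fun x => ENNReal.sum_le_tsum t)

section DyadicSums

variable {p : ℝ}

theorem sum_two_rpow_mul_le_rpow (hp : 0 < p) (t : Finset ℤ) {v : ℝ} (hv : 0 ≤ v)
    (ht : ∀ i ∈ t, (2 : ℝ) ^ i ≤ v) :
    (∑ i ∈ t, (2 : ℝ) ^ (p * i)) * (1 - 2 ^ (-p)) ≤ v ^ p := by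
  have rpow_mul_intCast (i : ℤ) : (2 : ℝ) ^ (p * i) = (2 ^ i) ^ p := by
    rw [mul_comm, Real.rpow_mul two_pos.le, Real.rpow_intCast]
  induction t using Finset.induction_on_max generalizing v with
  | empty => simpa using Real.rpow_nonneg hv p
  | insert a t hmax ih =>
    have rest_le : (∑ i ∈ t, (2 : ℝ) ^ (p * i)) * (1 - 2 ^ (-p)) ≤ 2 ^ (p * a) * 2 ^ (-p) :=
      calc (∑ i ∈ t, (2 : ℝ) ^ (p * i)) * (1 - 2 ^ (-p)) ≤ ((2 : ℝ) ^ (a - 1)) ^ p :=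
            ih (by positivity) fun i hi =>
              zpow_le_zpow_right₀ one_le_two (Int.le_sub_one_of_lt (hmax i hi))
        _ = 2 ^ (p * a) * 2 ^ (-p) := by
            rw [← rpow_mul_intCast, ← Real.rpow_add two_pos]; push_cast; ring_nf
    calc (∑ i ∈ insert a t, (2 : ℝ) ^ (p * i)) * (1 - 2 ^ (-p))
        = 2 ^ (p * a) * (1 - 2 ^ (-p)) + (∑ i ∈ t, (2 : ℝ) ^ (p * i)) * (1 - 2 ^ (-p)) := by
          rw [Finset.sum_insert fun h => (hmax a h).false, add_mul]
      _ ≤ 2 ^ (p * a) := by linarith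
      _ = (2 ^ a) ^ p := rpow_mul_intCast a
      _ ≤ v ^ p := by gcongr; exact ht a (Finset.mem_insert_self a t)

theorem one_sub_two_rpow_neg_pos (hp : 0 < p) : 0 < 1 - (2 : ℝ) ^ (-p) :=
  sub_pos.2 (Real.rpow_lt_one_of_one_lt_of_neg one_lt_two (neg_neg_of_pos hp))

theorem tsum_indicator_two_rpow_le (hp : 0 < p) {S : Set ℤ} {v : ℝ}
    (hS : ∀ i ∈ S, (2 : ℝ) ^ i ≤ v) :
    ∑' i : ℤ, S.indicator (fun i => ENNReal.ofReal (2 ^ (p * i))) i ≤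
      ENNReal.ofReal (1 - 2 ^ (-p))⁻¹ * ENNReal.ofReal v ^ p := by
  classical
  rw [ENNReal.tsum_eq_iSup_sum]
  refine iSup_le fun t => ?_
  have le_max_zero (i : ℤ) (hi : i ∈ t.filter (· ∈ S)) : (2 : ℝ) ^ i ≤ max v 0 :=
    (hS i (Finset.mem_filter.1 hi).2).trans (le_max_left v 0)
  calc ∑ i ∈ t, S.indicator (fun i => ENNReal.ofReal (2 ^ (p * i))) i
      = ENNReal.ofReal (∑ i ∈ t.filter (· ∈ S), (2 : ℝ) ^ (p * i)) := by
        simp only [indicator_apply]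
        rw [← Finset.sum_filter, ENNReal.ofReal_sum_of_nonneg fun i _ => by positivity]
    _ ≤ ENNReal.ofReal ((1 - 2 ^ (-p))⁻¹ * max v 0 ^ p) := by
        refine ENNReal.ofReal_le_ofReal ?_
        rw [inv_mul_eq_div, le_div_iff₀ (one_sub_two_rpow_neg_pos hp)]
        exact sum_two_rpow_mul_le_rpow hp _ (le_max_right v 0) le_max_zero
    _ = ENNReal.ofReal (1 - 2 ^ (-p))⁻¹ * ENNReal.ofReal v ^ p := by
        rw [ENNReal.ofReal_mul (inv_nonneg.2 (one_sub_two_rpow_neg_pos hp).le),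
          ← ENNReal.ofReal_rpow_of_nonneg (le_max_right v 0) hp.le, ENNReal.ofReal_max,
          ENNReal.ofReal_zero, max_zero]

end DyadicSums

section Slicing

variable {X : Type*} [MeasurableSpace X] {μ : Measure X} {u : X → ℝ} {p : ℝ}

theorem tsum_indicator_two_rpow_mul_setLIntegral_le (hp : 0 < p) (hu : Measurable u)
    (f : X → ℝ≥0∞) (x : X) :
    ∑' i : ℤ, {i : ℤ | 2 ^ i < u x}.indicator (fun i => ENNReal.ofReal (2 ^ (p * i))) i *
        ∫⁻ y in {y | 2 ^ (i - 1) < u y}ᶜ, f y ∂μ ≤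
      ENNReal.ofReal (1 - 2 ^ (-p))⁻¹ *
        ∫⁻ y, ENNReal.ofReal (2 * |u x - u y|) ^ p * f y ∂μ := by
  set w : ℤ → ℝ≥0∞ := {i : ℤ | 2 ^ i < u x}.indicator fun i => ENNReal.ofReal (2 ^ (p * i))
  have w_ne_top (i : ℤ) : w i ≠ ⊤ := by
    simp only [w, indicator_apply]; split_ifs <;> simp
  have level_le {i : ℤ} {y : X} (hx : 2 ^ i < u x) (hy : u y ≤ 2 ^ (i - 1)) :
      (2 : ℝ) ^ i ≤ 2 * |u x - u y| := by
    rw [zpow_sub_one₀ two_ne_zero] at hy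
    linarith [le_abs_self (u x - u y)]
  calc ∑' i, w i * ∫⁻ y in {y | 2 ^ (i - 1) < u y}ᶜ, f y ∂μ
      = ∑' i, ∫⁻ y, {y | 2 ^ (i - 1) < u y}ᶜ.indicator (fun y => w i * f y) y ∂μ := by
        refine tsum_congr fun i => ?_
        rw [lintegral_indicator (measurableSet_lt measurable_const hu).compl,
          lintegral_const_mul' _ _ (w_ne_top i)]
    _ ≤ ∫⁻ y, ∑' i, {y | 2 ^ (i - 1) < u y}ᶜ.indicator (fun y => w i * f y) y ∂μ :=
        tsum_lintegral_le_lintegral_tsum μ _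
    _ = ∫⁻ y, (∑' i, {i : ℤ | 2 ^ i < u x ∧ u y ≤ 2 ^ (i - 1)}.indicator
          (fun i => ENNReal.ofReal (2 ^ (p * i))) i) * f y ∂μ := by
        simp only [← ENNReal.tsum_mul_right]
        refine lintegral_congr fun y => tsum_congr fun i => ?_
        by_cases hx : 2 ^ i < u x <;> by_cases hy : 2 ^ (i - 1) < u y <;>
          simp [w, hx, hy, not_le.2, not_lt.1]
    _ ≤ ∫⁻ y, ENNReal.ofReal (1 - 2 ^ (-p))⁻¹ *
          (ENNReal.ofReal (2 * |u x - u y|) ^ p * f y) ∂μ := by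
        refine lintegral_mono fun y => ?_
        rw [← mul_assoc]
        gcongr
        exact tsum_indicator_two_rpow_le hp fun i hi => level_le hi.1 hi.2
    _ = _ := lintegral_const_mul' _ _ ENNReal.ofReal_ne_top

theorem mul_superlevel_le_setLIntegral (hu : Measurable u) (V : X → ℝ≥0∞) (k : X → X → ℝ≥0∞)
    (φ : ℝ≥0∞ → ℝ≥0∞)
    (hφ : ∀ᵐ x ∂μ, ∀ E, MeasurableSet E → x ∈ E → μ E ≠ 0 →
      φ (μ E) ≤ (∫⁻ y in Eᶜ, k x y ∂μ) + V x) {s t : ℝ} (hst : s ≤ t) :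
    φ (μ {x | s < u x}) * μ {x | t < u x} ≤
      ∫⁻ x in {x | t < u x}, (∫⁻ y in {y | s < u y}ᶜ, k x y ∂μ) + V x ∂μ := by
  have measurableSet_level (r : ℝ) : MeasurableSet {x | r < u x} :=
    measurableSet_lt measurable_const hu
  have level_subset : {x | t < u x} ⊆ {x | s < u x} := fun x hx =>
    hst.trans_lt (show t < u x from hx)
  rcases eq_or_ne (μ {x | t < u x}) 0 with h0 | h0
  · simp only [h0, mul_zero, zero_le]
  rw [← setLIntegral_const]
  refine setLIntegral_mono_ae' (measurableSet_level t) ?_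
  filter_upwards [hφ] with x hx hxt
  exact hx _ (measurableSet_level s) (level_subset hxt)
    (measure_pos_of_superset level_subset h0).ne'

theorem tsum_superlevel_le_lintegral_add_lintegral (hp : 0 < p) (hu : Measurable u)
    {V : X → ℝ≥0∞} (hV : Measurable V) (k : X → X → ℝ≥0∞) (φ : ℝ≥0∞ → ℝ≥0∞)
    (hφ : ∀ᵐ x ∂μ, ∀ E, MeasurableSet E → x ∈ E → μ E ≠ 0 →
      φ (μ E) ≤ (∫⁻ y in Eᶜ, k x y ∂μ) + V x) :
    ∑' i : ℤ, ENNReal.ofReal (2 ^ (p * i)) * φ (μ {x | 2 ^ (i - 1) < u x}) *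
        μ {x | 2 ^ i < u x} ≤
      ENNReal.ofReal (1 - 2 ^ (-p))⁻¹ *
        ((∫⁻ x, ∫⁻ y, ENNReal.ofReal (2 * |u x - u y|) ^ p * k x y ∂μ ∂μ) +
          ∫⁻ x, ENNReal.ofReal (u x) ^ p * V x ∂μ) := by
  set C := ENNReal.ofReal (1 - 2 ^ (-p))⁻¹
  set w : X → ℤ → ℝ≥0∞ := fun x =>
    {i : ℤ | 2 ^ i < u x}.indicator fun i => ENNReal.ofReal (2 ^ (p * i))
  have term_le (i : ℤ) :
      ENNReal.ofReal (2 ^ (p * i)) * φ (μ {x | 2 ^ (i - 1) < u x}) * μ {x | 2 ^ i < u x} ≤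
        ∫⁻ x, w x i * ((∫⁻ y in {y | 2 ^ (i - 1) < u y}ᶜ, k x y ∂μ) + V x) ∂μ := by
    have level_le : (2 : ℝ) ^ (i - 1) ≤ 2 ^ i :=
      zpow_le_zpow_right₀ one_le_two (sub_one_lt i).le
    rw [mul_assoc]
    refine (mul_le_mul_right (mul_superlevel_le_setLIntegral hu V k φ hφ level_le) _).trans_eq ?_
    rw [← lintegral_const_mul' _ _ ENNReal.ofReal_ne_top,
      ← lintegral_indicator (measurableSet_lt measurable_const hu)]
    refine lintegral_congr fun x => ?_
    by_cases hx : 2 ^ i < u x <;> simp [w, hx]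
  calc ∑' i : ℤ, ENNReal.ofReal (2 ^ (p * i)) * φ (μ {x | 2 ^ (i - 1) < u x}) *
        μ {x | 2 ^ i < u x}
      ≤ ∫⁻ x, ∑' i, w x i * ((∫⁻ y in {y | 2 ^ (i - 1) < u y}ᶜ, k x y ∂μ) + V x) ∂μ :=
        (ENNReal.tsum_le_tsum term_le).trans (tsum_lintegral_le_lintegral_tsum μ _)
    _ ≤ ∫⁻ x, C * (∫⁻ y, ENNReal.ofReal (2 * |u x - u y|) ^ p * k x y ∂μ) +
          C * (ENNReal.ofReal (u x) ^ p * V x) ∂μ := by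
        refine lintegral_mono fun x => ?_
        simp only [mul_add, ENNReal.tsum_add, ENNReal.tsum_mul_right]
        rw [← mul_assoc C]
        gcongr
        · exact tsum_indicator_two_rpow_mul_setLIntegral_le hp hu (k x) x
        · exact tsum_indicator_two_rpow_le hp fun i hi => le_of_lt hi
    _ = _ := by
        rw [lintegral_add_right _ (by fun_prop), lintegral_const_mul' _ _ ENNReal.ofReal_ne_top,
          lintegral_const_mul' _ _ ENNReal.ofReal_ne_top, mul_add]

theorem ofReal_mul_tsum_superlevel_le_lintegral_add_lintegral (hp : 0 < p) (hu : Measurable u)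
    {V : X → ℝ≥0∞} (hV : Measurable V) (k : X → X → ℝ≥0∞) (φ : ℝ≥0∞ → ℝ≥0∞)
    (hφ : ∀ᵐ x ∂μ, ∀ E, MeasurableSet E → x ∈ E → μ E ≠ 0 →
      φ (μ E) ≤ (∫⁻ y in Eᶜ, k x y ∂μ) + V x) :
    ENNReal.ofReal ((1 - 2 ^ (-p)) / 2 ^ (p + 1)) * ∑' i : ℤ, ENNReal.ofReal (2 ^ (p * i)) *
        φ (μ {x | 2 ^ (i - 1) < u x}) * μ {x | 2 ^ i < u x} ≤
      1 / 2 * (∫⁻ x, ∫⁻ y, ENNReal.ofReal |u x - u y| ^ p * k x y ∂μ ∂μ) +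
        ∫⁻ x, ENNReal.ofReal (u x) ^ p * V x ∂μ := by
  set I := ∫⁻ x, ∫⁻ y, ENNReal.ofReal |u x - u y| ^ p * k x y ∂μ ∂μ
  set J := ∫⁻ x, ENNReal.ofReal (u x) ^ p * V x ∂μ
  have geom_pos := one_sub_two_rpow_neg_pos hp
  have lintegral_two_mul_eq :
      ∫⁻ x, ∫⁻ y, ENNReal.ofReal (2 * |u x - u y|) ^ p * k x y ∂μ ∂μ =
        ENNReal.ofReal (2 ^ (p + 1)) * (1 / 2 * I) := by
    have two_rpow_ne_top : (2 : ℝ≥0∞) ^ p ≠ ⊤ := ENNReal.rpow_ne_top_of_nonneg hp.le (by simp)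
    simp only [ENNReal.ofReal_mul two_pos.le, ENNReal.ofReal_ofNat,
      ENNReal.mul_rpow_of_nonneg _ _ hp.le, mul_assoc, lintegral_const_mul' _ _ two_rpow_ne_top]
    rw [← ENNReal.ofReal_rpow_of_pos two_pos, ENNReal.ofReal_ofNat,
      ENNReal.rpow_add p 1 two_ne_zero (by simp), ENNReal.rpow_one, ← mul_assoc, mul_assoc (2 ^ p),
      one_div, ENNReal.mul_inv_cancel two_ne_zero (by simp), mul_one]
  have one_le_const : 1 ≤ ENNReal.ofReal (2 ^ (p + 1)) := by
    simpa using Real.one_le_rpow one_le_two (by positivity)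
  calc _ ≤ ENNReal.ofReal ((1 - 2 ^ (-p)) / 2 ^ (p + 1)) * (ENNReal.ofReal (1 - 2 ^ (-p))⁻¹ *
          (ENNReal.ofReal (2 ^ (p + 1)) * (1 / 2 * I) + J)) := by
        rw [← lintegral_two_mul_eq]
        gcongr
        exact tsum_superlevel_le_lintegral_add_lintegral hp hu hV k φ hφ
    _ ≤ ENNReal.ofReal ((1 - 2 ^ (-p)) / 2 ^ (p + 1)) * (ENNReal.ofReal (1 - 2 ^ (-p))⁻¹ *
          (ENNReal.ofReal (2 ^ (p + 1)) * (1 / 2 * I + J))) := by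
        rw [mul_add (ENNReal.ofReal (2 ^ (p + 1)))]
        gcongr
        exact le_mul_of_one_le_left zero_le one_le_const
    _ = 1 / 2 * I + J := by
        rw [← mul_assoc, ← mul_assoc, ← ENNReal.ofReal_mul (by positivity),
          ← ENNReal.ofReal_mul (by positivity), div_mul_eq_mul_div, mul_inv_cancel₀ geom_pos.ne',
          one_div_mul_cancel (by positivity), ENNReal.ofReal_one, one_mul]

end Slicing

theorem ofReal_mul_measure_closedBall_sub_le_setLIntegral_compl {X : Type*} [MetricSpace X]
    [MeasurableSpace X] [OpensMeasurableSpace X] (μ : Measure X) {E : Set X}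
    (hE : MeasurableSet E) {x : X} (hx : x ∈ E) (R : ℝ) {q : ℝ} (hq : 0 ≤ q) :
    ENNReal.ofReal (1 / R ^ q) * (μ (closedBall x R) - μ E) ≤
      ∫⁻ y in Eᶜ, ENNReal.ofReal (1 / dist x y ^ q) ∂μ :=
  calc ENNReal.ofReal (1 / R ^ q) * (μ (closedBall x R) - μ E)
      ≤ ENNReal.ofReal (1 / R ^ q) * μ (closedBall x R \ E) := by gcongr; exact le_measure_sdiff
    _ = ∫⁻ _ in closedBall x R \ E, ENNReal.ofReal (1 / R ^ q) ∂μ :=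
        (setLIntegral_const _ _).symm
    _ ≤ ∫⁻ y in closedBall x R \ E, ENNReal.ofReal (1 / dist x y ^ q) ∂μ := by
        refine setLIntegral_mono' (measurableSet_closedBall.diff hE) fun y hy => ?_
        have dist_pos : 0 < dist x y := dist_pos.2 fun h => hy.2 (h ▸ hx)
        have dist_le : dist x y ≤ R := dist_comm x y ▸ hy.1
        gcongr
    _ ≤ ∫⁻ y in Eᶜ, ENNReal.ofReal (1 / dist x y ^ q) ∂μ := lintegral_mono_set fun _ hy => hy.2

section Reflection

/-- The set of points `y ∉ Ω` whose reflection `2x - y` through `x` does not lie in `Ω` either.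
For `Ω` convex and `x ∉ Ω` this is the part of the space which is not cancelled in the principal
value integral defining the fractional mean curvature at `x`. -/
def doubleCompl {E : Type*} [AddCommGroup E] (Ω : Set E) (x : E) : Set E :=
  Ωᶜ \ (fun y => x + x - y) ⁻¹' Ω

theorem preimage_reflection_subset_compl {E : Type*} [AddCommGroup E] [Module ℝ E] {Ω : Set E}
    {x : E} (hΩ : Convex ℝ Ω) (hx : x ∉ Ω) : (fun y => x + x - y) ⁻¹' Ω ⊆ Ωᶜ := by
  intro y hrefl hy
  have hmid : (1 / 2 : ℝ) • (x + x - y) + (1 / 2 : ℝ) • y ∈ Ω :=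
    hΩ hrefl hy (by norm_num) (by norm_num) (by norm_num)
  rw [← smul_add, sub_add_cancel, ← two_smul ℝ x, smul_smul, one_div_mul_cancel two_ne_zero,
    one_smul] at hmid
  exact hx hmid

theorem dist_reflection_self {E : Type*} [SeminormedAddCommGroup E] (x y : E) :
    dist (x + x - y) x = dist y x := by
  rw [dist_eq_norm, dist_eq_norm_sub', add_sub_right_comm, add_sub_cancel_right]

variable {E : Type*} [NormedAddCommGroup E] [MeasurableSpace E] [BorelSpace E] {Ω : Set E} {x : E}

theorem measurableSet_doubleCompl (hΩ : MeasurableSet Ω) (x : E) :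
    MeasurableSet (doubleCompl Ω x) :=
  hΩ.compl.diff ((measurableEmbedding_subLeft (x + x)).measurable hΩ)

variable (μ : Measure E) [μ.IsAddLeftInvariant] [μ.IsNegInvariant]

theorem integral_indicator_sub_mul_eq_setIntegral_doubleCompl [NormedSpace ℝ E]
    (hΩm : MeasurableSet Ω) (hΩ : Convex ℝ Ω) (hx : x ∉ Ω) {K : E → ℝ}
    (hK : Integrable K μ) (hKx : ∀ y, K (x + x - y) = K y) :
    ∫ y, (Ωᶜ.indicator (fun _ => (1 : ℝ)) y - Ω.indicator (fun _ => (1 : ℝ)) y) * K y ∂μ =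
      ∫ y in doubleCompl Ω x, K y ∂μ := by
  have setIntegral_reflection :
      ∫ y in (fun y => x + x - y) ⁻¹' Ω, K y ∂μ = ∫ y in Ω, K y ∂μ := by
    simpa only [hKx] using (Measure.measurePreserving_sub_left μ (x + x)).setIntegral_preimage_emb
      (measurableEmbedding_subLeft (x + x)) K Ω
  calc ∫ y, (Ωᶜ.indicator (fun _ => (1 : ℝ)) y - Ω.indicator (fun _ => (1 : ℝ)) y) * K y ∂μ
      = ∫ y, Ωᶜ.indicator K y - Ω.indicator K y ∂μ := by
        refine integral_congr_ae (Eventually.of_forall fun y => ?_)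
        by_cases hy : y ∈ Ω <;> simp [hy]
    _ = ∫ y in Ωᶜ, K y ∂μ - ∫ y in Ω, K y ∂μ := by
        rw [integral_sub (hK.indicator hΩm.compl) (hK.indicator hΩm),
          integral_indicator hΩm.compl, integral_indicator hΩm]
    _ = ∫ y in doubleCompl Ω x, K y ∂μ := by
        rw [← setIntegral_reflection, doubleCompl, setIntegral_sdiff
          ((measurableEmbedding_subLeft (x + x)).measurable hΩm) hK.integrableOn
          (preimage_reflection_subset_compl hΩ hx)]

theorem measureReal_closedBall_sub_le_measureReal_doubleCompl_inter (hΩm : MeasurableSet Ω)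
    (x : E) (R : ℝ) (hR : μ (closedBall x R) ≠ ⊤) :
    μ.real (closedBall x R) - 2 * μ.real (Ω ∩ closedBall x R) ≤
      μ.real (doubleCompl Ω x ∩ closedBall x R) := by
  set B := closedBall x R
  set reflected := (fun y => x + x - y) ⁻¹' (Ω ∩ B)
  have cover : B ⊆ doubleCompl Ω x ∩ B ∪ (Ω ∩ B ∪ reflected) := fun y hy => by
    have hry : x + x - y ∈ B := by rwa [mem_closedBall, dist_reflection_self]
    by_cases h1 : y ∈ Ω <;> by_cases h2 : x + x - y ∈ Ω <;>
      simp [doubleCompl, reflected, h1, h2, hy, hry]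
  have measure_reflected : μ reflected = μ (Ω ∩ B) :=
    (Measure.measurePreserving_sub_left μ (x + x)).measure_preimage
      (hΩm.inter measurableSet_closedBall).nullMeasurableSet
  have inter_ne_top (A : Set E) : μ (A ∩ B) ≠ ⊤ := measure_ne_top_of_subset inter_subset_right hR
  have union_ne_top : μ (doubleCompl Ω x ∩ B ∪ (Ω ∩ B ∪ reflected)) ≠ ⊤ :=
    measure_union_ne_top (inter_ne_top _)
      (measure_union_ne_top (inter_ne_top _) (measure_reflected ▸ inter_ne_top _))
  rw [sub_le_iff_le_add, two_mul]
  calc μ.real B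
      ≤ μ.real (doubleCompl Ω x ∩ B ∪ (Ω ∩ B ∪ reflected)) := measureReal_mono cover union_ne_top
    _ ≤ μ.real (doubleCompl Ω x ∩ B) + (μ.real (Ω ∩ B) + μ.real reflected) :=
        (measureReal_union_le _ _).trans (add_le_add_right (measureReal_union_le _ _) _)
    _ = μ.real (doubleCompl Ω x ∩ B) + (μ.real (Ω ∩ B) + μ.real (Ω ∩ B)) := by
        rw [measureReal_def μ reflected, measure_reflected, measureReal_def μ (Ω ∩ B)]

end Reflection

theorem integrableOn_dist_rpow_neg {E : Type*} [NormedAddCommGroup E] [NormedSpace ℝ E]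
    [FiniteDimensional ℝ E] [MeasurableSpace E] [BorelSpace E] (μ : Measure E)
    [μ.IsAddHaarMeasure] {q : ℝ} (hq : (Module.finrank ℝ E : ℝ) < q) (x : E) {ε : ℝ}
    (hε : 0 < ε) :
    IntegrableOn (fun y => dist y x ^ (-q)) {y | ε < dist y x} μ := by
  have one_add_le {d : ℝ} (hd : ε < d) : ε / (1 + ε) * (1 + d) ≤ d := by
    rw [div_mul_eq_mul_div, div_le_iff₀ (by positivity)]
    linarith
  have majorant : Integrable (fun y => (ε / (1 + ε)) ^ (-q) * (1 + ‖y - x‖) ^ (-q)) μ :=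
    ((integrable_one_add_norm hq).comp_sub_right x).const_mul _
  refine majorant.integrableOn.mono' (Measurable.aestronglyMeasurable (by fun_prop)) ?_
  refine (ae_restrict_iff' (measurableSet_lt (by fun_prop) (by fun_prop))).2
    (Eventually.of_forall fun y hy => ?_)
  rw [Real.norm_of_nonneg (by positivity), ← Real.mul_rpow (by positivity) (by positivity),
    ← dist_eq_norm]
  exact Real.rpow_le_rpow_of_nonpos (by positivity) (one_add_le hy)
    (neg_nonpos.2 ((Nat.cast_nonneg _).trans hq.le))

/-- The volume of the unit ball of `ℝ^(n+1)`. -/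
noncomputable def unitBallVolume (n : ℕ) : ℝ :=
  volume.real (ball (0 : EuclideanSpace ℝ (Fin (n + 1))) 1)

theorem unitBallVolume_pos (n : ℕ) : 0 < unitBallVolume n :=
  ENNReal.toReal_pos (measure_ball_pos _ _ one_pos).ne' measure_ball_lt_top.ne

section EuclideanSpace

variable {n : ℕ} {α : ℝ} {Ω : Set (EuclideanSpace ℝ (Fin (n + 1)))}
  {x : EuclideanSpace ℝ (Fin (n + 1))}

theorem volume_real_closedBall_eq (x : EuclideanSpace ℝ (Fin (n + 1))) {R : ℝ} (hR : 0 ≤ R) :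
    volume.real (closedBall x R) = R ^ (n + 1) * unitBallVolume n := by
  rw [Measure.addHaar_real_closedBall _ _ hR, finrank_euclideanSpace_fin, unitBallVolume]

theorem fracMCIntegral_eq_setIntegral_doubleCompl (hα : 0 < α) (hΩm : MeasurableSet Ω)
    (hΩ : Convex ℝ Ω) (hx : x ∉ Ω) {ε : ℝ} (hε : 0 < ε) :
    fracMCIntegral n α Ω x ε =
      α / 2 * ∫ y in doubleCompl Ω x ∩ {y | ε < dist y x}, dist y x ^ (-(n + 1 + α)) := by
  have measurableSet_far : MeasurableSet {y | ε < dist y x} :=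
    measurableSet_lt measurable_const (by fun_prop)
  rw [← setIntegral_indicator measurableSet_far,
    ← integral_indicator_sub_mul_eq_setIntegral_doubleCompl volume hΩm hΩ hx, fracMCIntegral,
    ← integral_indicator measurableSet_far]
  · simp only [indicator_mul_right]
  · exact (integrableOn_dist_rpow_neg volume (by simpa) x hε).integrable_indicator measurableSet_far
  · simp only [indicator_apply, mem_ofPred_eq, dist_reflection_self, implies_true]

theorem le_fracMCIntegral (hα : 0 < α) (hΩm : MeasurableSet Ω) (hΩ : Convex ℝ Ω) (hx : x ∉ Ω)
    {ε R : ℝ} (hε : 0 < ε) (hR : 0 < R) :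
    α / 2 * (R ^ (-(n + 1 + α)) *
      (volume.real (doubleCompl Ω x ∩ closedBall x R) - volume.real (closedBall x ε))) ≤
        fracMCIntegral n α Ω x ε := by
  rw [fracMCIntegral_eq_setIntegral_doubleCompl hα hΩm hΩ hx hε]
  refine mul_le_mul_of_nonneg_left ?_ (by positivity)
  set annulus := (doubleCompl Ω x ∩ closedBall x R) \ closedBall x ε
  have annulus_subset : annulus ⊆ doubleCompl Ω x ∩ {y | ε < dist y x} :=
    fun y hy => ⟨hy.1.1, show ε < dist y x from lt_of_not_ge hy.2⟩
  have measurableSet_annulus : MeasurableSet annulus :=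
    ((measurableSet_doubleCompl hΩm x).inter measurableSet_closedBall).diff measurableSet_closedBall
  have volume_annulus_ne_top : volume annulus ≠ ⊤ :=
    measure_ne_top_of_subset (fun y hy => hy.1.2) measure_closedBall_lt_top.ne
  have integrable : IntegrableOn (fun y => dist y x ^ (-((n : ℝ) + 1 + α)))
      (doubleCompl Ω x ∩ {y | ε < dist y x}) :=
    (integrableOn_dist_rpow_neg volume (by simpa) x hε).mono_set inter_subset_right
  have rpow_le (y) (hy : y ∈ annulus) :
      R ^ (-((n : ℝ) + 1 + α)) ≤ dist y x ^ (-((n : ℝ) + 1 + α)) :=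
    Real.rpow_le_rpow_of_nonpos (hε.trans (annulus_subset hy).2) hy.1.2
      (neg_nonpos.2 (by positivity))
  calc R ^ (-((n : ℝ) + 1 + α)) *
        (volume.real (doubleCompl Ω x ∩ closedBall x R) - volume.real (closedBall x ε))
      ≤ R ^ (-((n : ℝ) + 1 + α)) * volume.real annulus := by
        gcongr
        exact le_measureReal_sdiff (h := measure_closedBall_lt_top.ne)
    _ ≤ ∫ y in annulus, dist y x ^ (-((n : ℝ) + 1 + α)) :=
        setIntegral_ge_of_const_le_real measurableSet_annulus volume_annulus_ne_top rpow_le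
          (integrable.mono_set annulus_subset)
    _ ≤ ∫ y in doubleCompl Ω x ∩ {y | ε < dist y x}, dist y x ^ (-((n : ℝ) + 1 + α)) :=
        setIntegral_mono_set integrable (Eventually.of_forall fun y => by positivity)
          annulus_subset.eventuallyLE

theorem IsFracMeanCurv.mul_volume_doubleCompl_le (hα : 0 < α) (hΩm : MeasurableSet Ω)
    (hΩ : Convex ℝ Ω) (hx : x ∉ Ω) {h : ℝ} (hh : IsFracMeanCurv n α Ω x h) {R : ℝ} (hR : 0 < R) :
    α / 2 * (R ^ (-(n + 1 + α)) * volume.real (doubleCompl Ω x ∩ closedBall x R)) ≤ h := by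
  have volume_closedBall_tendsto_zero :
      Tendsto (fun ε => volume.real (closedBall x ε)) (nhdsWithin 0 (Ioi 0)) (nhds 0) := by
    have hpow : Tendsto (fun ε : ℝ => ε ^ (n + 1) * unitBallVolume n) (nhdsWithin 0 (Ioi 0))
        (nhds 0) :=
      tendsto_nhdsWithin_of_tendsto_nhds (Continuous.tendsto' (by fun_prop) 0 0 (by simp))
    refine hpow.congr' (eventually_mem_nhdsWithin.mono fun ε hε => ?_)
    exact (volume_real_closedBall_eq x (le_of_lt hε)).symm
  refine le_of_tendsto_of_tendsto ?_ hh
    (eventually_mem_nhdsWithin.mono fun ε hε => le_fracMCIntegral hα hΩm hΩ hx hε hR)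
  simpa using ((volume_closedBall_tendsto_zero.const_sub
    (volume.real (doubleCompl Ω x ∩ closedBall x R))).const_mul _).const_mul (α / 2)

end EuclideanSpace

theorem exists_mem_segment_frontier {E : Type*} [AddCommGroup E] [Module ℝ E] [TopologicalSpace E]
    [ContinuousAdd E] [ContinuousSMul ℝ E] {A : Set E} {y z : E} (hy : y ∈ interior A)
    (hz : z ∉ A) : ∃ a ∈ segment ℝ y z, a ∈ frontier A := by
  by_contra! disjoint
  have hz' : z ∉ closure A := fun h =>
    disjoint z (right_mem_segment ℝ y z) ⟨h, fun h' => hz (interior_subset h')⟩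
  have cover : segment ℝ y z ⊆ interior A ∪ (closure A)ᶜ := fun a ha => by
    by_contra h
    rw [mem_union, mem_compl_iff, not_or, not_not] at h
    exact disjoint a ha ⟨h.2, h.1⟩
  obtain ⟨a, -, hint, hext⟩ := (convex_segment y z).isPreconnected _ _ isOpen_interior
    isClosed_closure.isOpen_compl cover ⟨y, left_mem_segment ℝ y z, hy⟩
    ⟨z, right_mem_segment ℝ y z, hz'⟩
  exact hext (interior_subset_closure hint)

section InnerProductSpace

variable {E : Type*} [NormedAddCommGroup E] [InnerProductSpace ℝ E] {Ω : Set E} {x ν : E}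

theorem exists_norm_eq_one_forall_inner_sub_neg [CompleteSpace E] (hne : Ω.Nonempty)
    (hΩo : IsOpen Ω) (hΩ : Convex ℝ Ω) (hx : x ∉ Ω) :
    ∃ ν : E, ‖ν‖ = 1 ∧ ∀ a ∈ Ω, inner ℝ ν (a - x) < 0 := by
  obtain ⟨f, hf⟩ := geometric_hahn_banach_open_point hΩ hΩo hx
  set w := (InnerProductSpace.toDual ℝ E).symm f
  have inner_neg (a) (ha : a ∈ Ω) : inner ℝ w (a - x) < 0 := by
    rw [InnerProductSpace.toDual_symm_apply, map_sub]
    exact sub_neg.2 (hf a ha)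
  have hw : w ≠ 0 := by
    obtain ⟨a, ha⟩ := hne
    exact fun h => (inner_neg a ha).ne (by rw [h, inner_zero_left])
  refine ⟨‖w‖⁻¹ • w, norm_smul_inv_norm hw, fun a ha => ?_⟩
  rw [real_inner_smul_left]
  exact mul_neg_of_pos_of_neg (inv_pos.2 (norm_pos_iff.2 hw)) (inner_neg a ha)

theorem dist_sub_inner_smul_le (hν : ‖ν‖ = 1) (x y : E) :
    dist (y + (-inner ℝ ν (y - x)) • ν) x ≤ dist y x := by
  rw [dist_eq_norm, dist_eq_norm, add_sub_right_comm]
  refine le_of_sq_le_sq ?_ (norm_nonneg _)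
  rw [norm_add_sq_real, norm_smul, hν, inner_smul_right, real_inner_comm, Real.norm_eq_abs,
    mul_one, sq_abs]
  nlinarith [sq_nonneg (inner ℝ ν (y - x))]

-- The hyperplane through `x` orthogonal to `ν` misses `Ω`, and projecting `y` onto it does not
-- increase the distance to `x`; the segment to the projection crosses the frontier.
theorem exists_add_smul_mem_frontier_inter_closedBall (hν : ‖ν‖ = 1)
    (hΩ : ∀ a ∈ Ω, inner ℝ ν (a - x) < 0) {R : ℝ} {y : E} (hy : y ∈ interior Ω)
    (hyR : y ∈ closedBall x R) : ∃ t : ℝ, y + t • ν ∈ frontier Ω ∩ closedBall x R := by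
  set T := -inner ℝ ν (y - x) with hT
  have projection_notMem : y + T • ν ∉ Ω := fun h => by
    have := hΩ _ h
    rw [add_sub_right_comm, inner_add_right, inner_smul_right, real_inner_self_eq_norm_sq, hν,
      hT] at this
    linarith
  have projection_mem_closedBall : y + T • ν ∈ closedBall x R :=
    (dist_sub_inner_smul_le hν x y).trans hyR
  obtain ⟨a, ha, ha_frontier⟩ := exists_mem_segment_frontier hy projection_notMem
  have ha_ball := (convex_closedBall x R).segment_subset hyR projection_mem_closedBall ha
  rw [segment_eq_image'] at ha
  obtain ⟨θ, -, rfl⟩ := ha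
  simp only [add_sub_cancel_left, smul_smul] at ha_frontier ha_ball
  exact ⟨θ * T, ha_frontier, ha_ball⟩

end InnerProductSpace

section Shadow

variable {n : ℕ} {Ω : Set (EuclideanSpace ℝ (Fin (n + 1)))} {x : EuclideanSpace ℝ (Fin (n + 1))}

theorem exists_orthonormalBasis_zero_eq {ν : EuclideanSpace ℝ (Fin (n + 1))} (hν : ‖ν‖ = 1) :
    ∃ b : OrthonormalBasis (Fin (n + 1)) ℝ (EuclideanSpace ℝ (Fin (n + 1))), b 0 = ν := by
  have orthonormal : Orthonormal ℝ (({0} : Set (Fin (n + 1))).domRestrict fun _ => ν) :=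
    ⟨fun _ => hν, fun i j h => absurd (Subsingleton.elim i j) h⟩
  obtain ⟨b, hb⟩ := orthonormal.exists_orthonormalBasis_extension_of_card_eq (by simp)
  exact ⟨b, hb 0 rfl⟩

theorem volume_image_inner_succ_le_hausdorffMeasure
    (b : OrthonormalBasis (Fin (n + 1)) ℝ (EuclideanSpace ℝ (Fin (n + 1))))
    (S : Set (EuclideanSpace ℝ (Fin (n + 1)))) :
    volume ((fun y (j : Fin n) => inner ℝ (b j.succ) y) '' S) ≤ μH[(n : ℝ)] S := by
  have lipschitz : LipschitzWith 1 fun y (j : Fin n) => inner ℝ (b j.succ) y := by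
    refine LipschitzWith.of_dist_le_mul fun y z => ?_
    rw [NNReal.coe_one, one_mul, dist_pi_le_iff dist_nonneg]
    intro j
    rw [Real.dist_eq, ← inner_sub_right, dist_eq_norm]
    simpa only [b.norm_eq_one, one_mul] using abs_real_inner_le_norm (b j.succ) (y - z)
  have hausdorff_eq : (μH[(n : ℝ)] : Measure (Fin n → ℝ)) = volume := by
    simpa only [Fintype.card_fin] using hausdorffMeasure_pi_real (ι := Fin n)
  simpa only [hausdorff_eq, ENNReal.coe_one, ENNReal.one_rpow, one_mul] using
    lipschitz.hausdorffMeasure_image_le (d := n) n.cast_nonneg S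

theorem volume_le_mul_hausdorffMeasure_of_shadow {ν : EuclideanSpace ℝ (Fin (n + 1))}
    (hν : ‖ν‖ = 1) {A S : Set (EuclideanSpace ℝ (Fin (n + 1)))} {s t : ℝ}
    (hA : ∀ y ∈ A, inner ℝ ν y ∈ Icc s t) (hAS : ∀ y ∈ A, ∃ r : ℝ, y + r • ν ∈ S) :
    volume A ≤ ENNReal.ofReal (t - s) * μH[(n : ℝ)] S := by
  obtain ⟨b, rfl⟩ := exists_orthonormalBasis_zero_eq hν
  set proj : EuclideanSpace ℝ (Fin (n + 1)) → Fin n → ℝ := fun y j => inner ℝ (b j.succ) y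
  have coordinates_preserving : MeasurePreserving fun y => (inner ℝ (b 0) y, proj y) := by
    simp only [proj, ← b.repr_apply_apply]
    exact (volume_preserving_piFinSuccAbove (fun _ : Fin (n + 1) => ℝ) 0).comp
      ((PiLp.volume_preserving_ofLp (Fin (n + 1))).comp b.measurePreserving_repr)
  have proj_mem (y) (hy : y ∈ A) : proj y ∈ proj '' S := by
    obtain ⟨r, hr⟩ := hAS y hy
    refine ⟨_, hr, funext fun j => ?_⟩
    simp only [proj, inner_add_right, inner_smul_right, b.orthonormal.2 (Fin.succ_ne_zero j),
      mul_zero, add_zero]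
  calc volume A
      ≤ volume ((fun y => (inner ℝ (b 0) y, proj y)) ⁻¹' Icc s t ×ˢ (proj '' S)) :=
        measure_mono fun y hy => ⟨hA y hy, proj_mem y hy⟩
    _ ≤ volume (Icc s t ×ˢ (proj '' S)) := coordinates_preserving.measure_preimage_le _
    _ = ENNReal.ofReal (t - s) * volume (proj '' S) := by
        rw [Measure.volume_eq_prod, Measure.prod_prod, Real.volume_Icc]
    _ ≤ ENNReal.ofReal (t - s) * μH[(n : ℝ)] S := by
        gcongr
        exact volume_image_inner_succ_le_hausdorffMeasure b S

theorem volume_inter_closedBall_le_hausdorffMeasure_frontier (hΩo : IsOpen Ω) (hΩ : Convex ℝ Ω)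
    (hx : x ∉ Ω) (R : ℝ) :
    volume (Ω ∩ closedBall x R) ≤
      ENNReal.ofReal (2 * R) * μH[(n : ℝ)] (frontier Ω ∩ closedBall x R) := by
  rcases Ω.eq_empty_or_nonempty with rfl | hne
  · simp
  obtain ⟨ν, hν, hνΩ⟩ := exists_norm_eq_one_forall_inner_sub_neg hne hΩo hΩ hx
  have inner_mem_Icc (y) (hy : y ∈ Ω ∩ closedBall x R) :
      inner ℝ ν y ∈ Icc (inner ℝ ν x - R) (inner ℝ ν x + R) := by
    have abs_le_radius : |inner ℝ ν (y - x)| ≤ R :=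
      calc |inner ℝ ν (y - x)| ≤ ‖ν‖ * ‖y - x‖ := abs_real_inner_le_norm ν (y - x)
        _ = dist y x := by rw [hν, one_mul, dist_eq_norm]
        _ ≤ R := hy.2
    rw [inner_sub_right, abs_le] at abs_le_radius
    constructor <;> linarith
  have shadow (y) (hy : y ∈ Ω ∩ closedBall x R) :
      ∃ t : ℝ, y + t • ν ∈ frontier Ω ∩ closedBall x R :=
    exists_add_smul_mem_frontier_inter_closedBall hν hνΩ (hΩo.interior_eq.symm ▸ hy.1) hy.2
  convert volume_le_mul_hausdorffMeasure_of_shadow hν inner_mem_Icc shadow using 3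
  ring

end Shadow

section IsoperimetricDichotomy

variable {n : ℕ} {α σ h R : ℝ} {Ω E : Set (EuclideanSpace ℝ (Fin (n + 1)))}
  {x : EuclideanSpace ℝ (Fin (n + 1))}

theorem IsFracMeanCurv.mul_rpow_neg_le_of_volume_inter_le (hα : 0 < α) (hΩm : MeasurableSet Ω)
    (hΩ : Convex ℝ Ω) (hx : x ∉ Ω) (hh : IsFracMeanCurv n α Ω x h) (hR : 0 < R)
    (hvol : volume.real (Ω ∩ closedBall x R) ≤ volume.real (closedBall x R) / 4) :
    α * unitBallVolume n / 4 * R ^ (-α) ≤ h := by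
  have rpow_add_one : R ^ ((n : ℝ) + 1) = R ^ (n + 1) := mod_cast Real.rpow_natCast R (n + 1)
  have half_le : volume.real (closedBall x R) / 2 ≤
      volume.real (doubleCompl Ω x ∩ closedBall x R) := by
    linarith [measureReal_closedBall_sub_le_measureReal_doubleCompl_inter volume hΩm x R
      measure_closedBall_lt_top.ne]
  calc α * unitBallVolume n / 4 * R ^ (-α)
      = α / 2 * (R ^ (-(n + 1 + α)) * (volume.real (closedBall x R) / 2)) := by
        rw [volume_real_closedBall_eq x hR.le, neg_add, Real.rpow_add hR, Real.rpow_neg hR.le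
          ((n : ℝ) + 1), rpow_add_one]
        field_simp
        ring
    _ ≤ α / 2 * (R ^ (-(n + 1 + α)) * volume.real (doubleCompl Ω x ∩ closedBall x R)) := by
        gcongr
    _ ≤ h := hh.mul_volume_doubleCompl_le hα hΩm hΩ hx hR

theorem ofReal_mul_pow_le_hausdorffMeasure_frontier_inter (hΩo : IsOpen Ω) (hΩ : Convex ℝ Ω)
    (hx : x ∉ Ω) (hR : 0 < R)
    (hvol : volume.real (closedBall x R) / 4 ≤ volume.real (Ω ∩ closedBall x R)) :
    ENNReal.ofReal (unitBallVolume n / 8 * R ^ n) ≤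
      μH[(n : ℝ)] (frontier Ω ∩ closedBall x R) := by
  have two_mul_radius_ne_zero : ENNReal.ofReal (2 * R) ≠ 0 := by simpa using hR
  refine (ENNReal.mul_le_mul_iff_right two_mul_radius_ne_zero ENNReal.ofReal_ne_top).1 ?_
  calc ENNReal.ofReal (2 * R) * ENNReal.ofReal (unitBallVolume n / 8 * R ^ n)
      = ENNReal.ofReal (volume.real (closedBall x R) / 4) := by
        rw [← ENNReal.ofReal_mul (by positivity), volume_real_closedBall_eq x hR.le]
        ring_nf
    _ ≤ ENNReal.ofReal (volume.real (Ω ∩ closedBall x R)) := ENNReal.ofReal_le_ofReal hvol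
    _ ≤ volume (Ω ∩ closedBall x R) := ENNReal.ofReal_toReal_le
    _ ≤ ENNReal.ofReal (2 * R) * μH[(n : ℝ)] (frontier Ω ∩ closedBall x R) :=
        volume_inter_closedBall_le_hausdorffMeasure_frontier hΩo hΩ hx R

theorem ofReal_mul_rpow_neg_le_setLIntegral_compl (hΩo : IsOpen Ω) (hΩ : Convex ℝ Ω)
    (hx : x ∉ Ω) (hE : MeasurableSet E) (hxE : x ∈ E) (hσ : 0 ≤ σ) (hR : 0 < R)
    (hvol : volume.real (closedBall x R) / 4 ≤ volume.real (Ω ∩ closedBall x R))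
    (hER : μH[(n : ℝ)].restrict (frontier Ω) E ≤
      ENNReal.ofReal (unitBallVolume n / 16 * R ^ n)) :
    ENNReal.ofReal (unitBallVolume n / 16 * R ^ (-σ)) ≤
      ∫⁻ y in Eᶜ, ENNReal.ofReal (1 / dist x y ^ (n + σ)) ∂μH[(n : ℝ)].restrict (frontier Ω) := by
  set μ := μH[(n : ℝ)].restrict (frontier Ω)
  have ω_pos := unitBallVolume_pos n
  have measure_closedBall_ge :
      ENNReal.ofReal (unitBallVolume n / 8 * R ^ n) ≤ μ (closedBall x R) := by
    rw [Measure.restrict_apply measurableSet_closedBall, inter_comm]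
    exact ofReal_mul_pow_le_hausdorffMeasure_frontier_inter hΩo hΩ hx hR hvol
  calc ENNReal.ofReal (unitBallVolume n / 16 * R ^ (-σ))
      = ENNReal.ofReal (1 / R ^ (n + σ)) * (ENNReal.ofReal (unitBallVolume n / 8 * R ^ n) -
          ENNReal.ofReal (unitBallVolume n / 16 * R ^ n)) := by
        rw [← ENNReal.ofReal_sub _ (by positivity), ← ENNReal.ofReal_mul (by positivity),
          Real.rpow_add hR, Real.rpow_natCast, Real.rpow_neg hR.le]
        congr 1
        field_simp
        norm_num
    _ ≤ ENNReal.ofReal (1 / R ^ (n + σ)) * (μ (closedBall x R) - μ E) := by gcongr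
    _ ≤ ∫⁻ y in Eᶜ, ENNReal.ofReal (1 / dist x y ^ (n + σ)) ∂μ :=
        ofReal_mul_measure_closedBall_sub_le_setLIntegral_compl μ hE hxE R (by positivity)

theorem ofReal_min_mul_rpow_neg_le_setLIntegral_compl_add (hΩo : IsOpen Ω) (hΩ : Convex ℝ Ω)
    (hx : x ∉ Ω) (hα : 0 < α) (hh : IsFracMeanCurv n α Ω x h) (hE : MeasurableSet E)
    (hxE : x ∈ E) (hσ : 0 ≤ σ) (hR : 0 < R)
    (hER : μH[(n : ℝ)].restrict (frontier Ω) E ≤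
      ENNReal.ofReal (unitBallVolume n / 16 * R ^ n)) :
    ENNReal.ofReal
        (min (unitBallVolume n / 16) ((α * unitBallVolume n / 4) ^ (σ / α)) * R ^ (-σ)) ≤
      (∫⁻ y in Eᶜ, ENNReal.ofReal (1 / dist x y ^ (n + σ)) ∂μH[(n : ℝ)].restrict (frontier Ω)) +
        ENNReal.ofReal (h ^ (σ / α)) := by
  have ω_pos := unitBallVolume_pos n
  rcases le_total (volume.real (Ω ∩ closedBall x R)) (volume.real (closedBall x R) / 4) with
    hvol | hvol
  · refine le_add_left (ENNReal.ofReal_le_ofReal ?_)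
    calc min (unitBallVolume n / 16) ((α * unitBallVolume n / 4) ^ (σ / α)) * R ^ (-σ)
        ≤ (α * unitBallVolume n / 4) ^ (σ / α) * R ^ (-σ) := by
          gcongr
          exact min_le_right _ _
      _ = (α * unitBallVolume n / 4 * R ^ (-α)) ^ (σ / α) := by
          rw [Real.mul_rpow (by positivity) (by positivity), ← Real.rpow_mul hR.le, neg_mul,
            mul_div_cancel₀ σ hα.ne']
      _ ≤ h ^ (σ / α) := by
          gcongr
          exact hh.mul_rpow_neg_le_of_volume_inter_le hα hΩo.measurableSet hΩ hx hR hvol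
  · refine le_add_right (le_trans ?_
      (ofReal_mul_rpow_neg_le_setLIntegral_compl hΩo hΩ hx hE hxE hσ hR hvol hER))
    gcongr
    exact min_le_left _ _

end IsoperimetricDichotomy

theorem exists_const_mul_rpow_le_setLIntegral_compl_add {n : ℕ} (hn : 1 ≤ n) {α σ : ℝ}
    (hα : 0 < α) (hσ : 0 < σ) :
    ∃ c : ℝ, 0 < c ∧ ∀ Ω : Set (EuclideanSpace ℝ (Fin (n + 1))), IsOpen Ω → Convex ℝ Ω →
      ∀ x ∉ Ω, ∀ h : ℝ, IsFracMeanCurv n α Ω x h →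
      ∀ E : Set (EuclideanSpace ℝ (Fin (n + 1))), MeasurableSet E → x ∈ E →
        μH[(n : ℝ)].restrict (frontier Ω) E ≠ 0 →
        ENNReal.ofReal c * μH[(n : ℝ)].restrict (frontier Ω) E ^ (-σ / n) ≤
          (∫⁻ y in Eᶜ, ENNReal.ofReal (1 / dist x y ^ (n + σ))
            ∂μH[(n : ℝ)].restrict (frontier Ω)) + ENNReal.ofReal (h ^ (σ / α)) := by
  have n_pos : (0 : ℝ) < n := mod_cast hn
  have ω_pos := unitBallVolume_pos n
  set ω := unitBallVolume n
  refine ⟨min (ω / 16) ((α * ω / 4) ^ (σ / α)) * (16 / ω) ^ (-σ / n), by positivity, ?_⟩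
  intro Ω hΩo hΩ x hx h hh E hE hxE hE0
  set a := μH[(n : ℝ)].restrict (frontier Ω) E
  rcases eq_or_ne a ⊤ with htop | htop
  · rw [htop, ENNReal.top_rpow_of_neg (div_neg_of_neg_of_pos (neg_neg_of_pos hσ) n_pos), mul_zero]
    exact zero_le
  have a_pos : 0 < a.toReal := ENNReal.toReal_pos hE0 htop
  set R := (16 / ω * a.toReal) ^ (n : ℝ)⁻¹ with hR
  have measure_eq : a = ENNReal.ofReal (ω / 16 * R ^ n) := by
    rw [hR, Real.rpow_inv_natCast_pow (by positivity) (by positivity), ← mul_assoc,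
      div_mul_div_cancel₀ (by positivity), div_self (by positivity), one_mul,
      ENNReal.ofReal_toReal htop]
  have R_rpow : R ^ (-σ) = (16 / ω) ^ (-σ / n) * a.toReal ^ (-σ / n) := by
    rw [hR, ← Real.rpow_mul (by positivity), ← Real.mul_rpow (by positivity) a_pos.le,
      inv_mul_eq_div]
  have a_rpow : a ^ (-σ / n) = ENNReal.ofReal (a.toReal ^ (-σ / n)) := by
    rw [← ENNReal.ofReal_rpow_of_pos a_pos, ENNReal.ofReal_toReal htop]
  rw [a_rpow, ← ENNReal.ofReal_mul (by positivity), mul_assoc, ← R_rpow]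
  exact ofReal_min_mul_rpow_neg_le_setLIntegral_compl_add hΩo hΩ hx hα hh hE hxE hσ.le
    (by positivity) measure_eq.le

theorem ofReal_mul_tsum_toReal_le {ι : Type*} {c : ℝ} (hc : 0 ≤ c) {w : ι → ℝ}
    (hw : ∀ i, 0 ≤ w i) (a b : ι → ℝ≥0∞) (r : ℝ) :
    ENNReal.ofReal (c * ∑' i, if (a i).toReal ≠ 0 then
        w i * (a i).toReal ^ r * (b i).toReal else 0) ≤
      ENNReal.ofReal c * ∑' i, ENNReal.ofReal (w i) * a i ^ r * b i := by
  set T : ι → ℝ := fun i =>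
    if (a i).toReal ≠ 0 then w i * (a i).toReal ^ r * (b i).toReal else 0
  have T_nonneg (i) : 0 ≤ T i := by
    have := hw i
    simp only [T]
    split_ifs <;> positivity
  have ofReal_T_le (i) : ENNReal.ofReal (T i) ≤ ENNReal.ofReal (w i) * a i ^ r * b i := by
    by_cases ha : (a i).toReal ≠ 0
    · have a_pos : 0 < (a i).toReal := lt_of_le_of_ne ENNReal.toReal_nonneg ha.symm
      simp only [T, if_pos ha]
      rw [ENNReal.ofReal_mul' ENNReal.toReal_nonneg, ENNReal.ofReal_mul (hw i),
        ← ENNReal.ofReal_rpow_of_pos a_pos, ENNReal.ofReal_toReal fun h => ha (by simp [h])]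
      gcongr
      exact ENNReal.ofReal_toReal_le
    · simp only [T, if_neg ha, ENNReal.ofReal_zero, zero_le]
  rw [ENNReal.ofReal_mul hc]
  gcongr
  by_cases hT : Summable T
  · rw [ENNReal.ofReal_tsum_of_nonneg T_nonneg hT]
    exact ENNReal.tsum_le_tsum ofReal_T_le
  · simp [tsum_eq_zero_of_not_summable hT]

theorem slicing_lower_bound_convex_general {n : ℕ} (hn : 1 ≤ n) {α s p : ℝ} (hα : 0 < α)
    (hs : 0 < s) (hp : 0 < p) :
    ∃ c : ℝ, 0 < c ∧
      ∀ Ω : Set (EuclideanSpace ℝ (Fin (n + 1))), IsOpen Ω → Convex ℝ Ω →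
      ∀ Hα : EuclideanSpace ℝ (Fin (n + 1)) → ℝ, Measurable Hα →
        (∀ᵐ x ∂(μH[(n : ℝ)].restrict (frontier Ω)), IsFracMeanCurv n α Ω x (Hα x)) →
      ∀ u : EuclideanSpace ℝ (Fin (n + 1)) → ℝ, Measurable u → (∀ x, 0 ≤ u x) →
        ENNReal.ofReal c * ∑' i : ℤ, ENNReal.ofReal (2 ^ (p * i)) *
            μH[(n : ℝ)] {x | x ∈ frontier Ω ∧ 2 ^ (i - 1) < u x} ^ (-(s * p) / n) *
            μH[(n : ℝ)] {x | x ∈ frontier Ω ∧ 2 ^ i < u x} ≤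
          1 / 2 * (∫⁻ x in frontier Ω, ∫⁻ y in frontier Ω,
              ENNReal.ofReal (|u x - u y| ^ p / dist x y ^ (n + s * p)) ∂μH[(n : ℝ)] ∂μH[(n : ℝ)]) +
            ∫⁻ x in frontier Ω, ENNReal.ofReal (Hα x ^ (s * p / α) * u x ^ p) ∂μH[(n : ℝ)] := by
  obtain ⟨c₀, c₀_pos, key⟩ := exists_const_mul_rpow_le_setLIntegral_compl_add hn hα (mul_pos hs hp)
  refine ⟨(1 - 2 ^ (-p)) / 2 ^ (p + 1) * c₀,
    mul_pos (div_pos (one_sub_two_rpow_neg_pos hp) (by positivity)) c₀_pos, ?_⟩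
  intro Ω hΩo hΩ Hα hHm hH u hu hu0
  set μ := μH[(n : ℝ)].restrict (frontier Ω)
  have level_eq (t : ℝ) : μH[(n : ℝ)] {x | x ∈ frontier Ω ∧ t < u x} = μ {x | t < u x} := by
    rw [Measure.restrict_apply (measurableSet_lt measurable_const hu), inter_comm]
    rfl
  have hφ : ∀ᵐ x ∂μ, ∀ E, MeasurableSet E → x ∈ E → μ E ≠ 0 →
      ENNReal.ofReal c₀ * μ E ^ (-(s * p) / n) ≤
        (∫⁻ y in Eᶜ, ENNReal.ofReal (1 / dist x y ^ (n + s * p)) ∂μ) +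
          ENNReal.ofReal (Hα x ^ (s * p / α)) := by
    filter_upwards [hH, ae_restrict_mem isClosed_frontier.measurableSet] with x hx hxΩ
    exact key Ω hΩo hΩ x (hΩo.frontier_eq ▸ hxΩ).2 (Hα x) hx
  have gagliardo_eq (x y) : ENNReal.ofReal (|u x - u y| ^ p / dist x y ^ (n + s * p)) =
      ENNReal.ofReal |u x - u y| ^ p * ENNReal.ofReal (1 / dist x y ^ (n + s * p)) := by
    rw [div_eq_mul_one_div, ENNReal.ofReal_mul (by positivity),
      ENNReal.ofReal_rpow_of_nonneg (abs_nonneg _) hp.le]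
  have curvature_eq (x) : ENNReal.ofReal (Hα x ^ (s * p / α) * u x ^ p) =
      ENNReal.ofReal (u x) ^ p * ENNReal.ofReal (Hα x ^ (s * p / α)) := by
    rw [mul_comm, ENNReal.ofReal_mul (Real.rpow_nonneg (hu0 x) p),
      ENNReal.ofReal_rpow_of_nonneg (hu0 x) hp.le]
  have slicing := ofReal_mul_tsum_superlevel_le_lintegral_add_lintegral hp hu
    (by fun_prop : Measurable fun x => ENNReal.ofReal (Hα x ^ (s * p / α))) _
    (fun a => ENNReal.ofReal c₀ * a ^ (-(s * p) / n)) hφ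
  simp only [gagliardo_eq, curvature_eq, level_eq]
  simpa only [ENNReal.ofReal_mul' c₀_pos.le, mul_left_comm _ (ENNReal.ofReal c₀),
    mul_assoc, ENNReal.tsum_mul_left] using slicing

/-- Slicing lemma: the Gagliardo energy on `∂Ω` plus the weighted `L^p` term controls
the dyadic sum `Σ 2^{pi} a_{i-1}^{-sp/n} a_i`, where `a_i = |{u > 2^i}|`. -/
theorem slicing_lower_bound_convex
    (n : ℕ) (hn : 1 ≤ n) (α s p : ℝ)
    (hα : α ∈ Set.Ioo (0:ℝ) 1) (hs : s ∈ Set.Ioo (0:ℝ) 1) (hp : 1 ≤ p)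
    (hnsp : (n:ℝ) > s * p) :
    ∃ c : ℝ, 0 < c ∧
      ∀ (Ω : Set (EuclideanSpace ℝ (Fin (n+1)))), IsOpen Ω → Convex ℝ Ω →
      ∀ (Hα : EuclideanSpace ℝ (Fin (n+1)) → ℝ), Measurable Hα →
        (∀ x ∈ frontier Ω, 0 ≤ Hα x) →
        (∀ᵐ x ∂(μH[(n:ℝ)].restrict (frontier Ω)), IsFracMeanCurv n α Ω x (Hα x)) →
      ∀ (u : EuclideanSpace ℝ (Fin (n+1)) → ℝ), Measurable u →
        (∀ x, 0 ≤ u x) → (∃ B : ℝ, ∀ x, u x ≤ B) →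
        (∃ K : Set (EuclideanSpace ℝ (Fin (n+1))), IsCompact K ∧
          ∀ x ∈ frontier Ω, x ∉ K → u x = 0) →
        (1/2) * (∫⁻ x in frontier Ω, ∫⁻ y in frontier Ω,
              ENNReal.ofReal (|u x - u y| ^ p / dist x y ^ ((n:ℝ) + s * p))
                ∂μH[(n:ℝ)] ∂μH[(n:ℝ)])
          + ∫⁻ x in frontier Ω,
              ENNReal.ofReal (Hα x ^ (s * p / α) * u x ^ p) ∂μH[(n:ℝ)]
          ≥ ENNReal.ofReal (c * ∑' i : ℤ,
              if (μH[(n:ℝ)] {x | x ∈ frontier Ω ∧ (2:ℝ) ^ (i - 1) < u x}).toReal ≠ 0 then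
                (2:ℝ) ^ (p * (i:ℝ)) *
                  (μH[(n:ℝ)] {x | x ∈ frontier Ω ∧ (2:ℝ) ^ (i - 1) < u x}).toReal
                    ^ (-(s * p) / (n:ℝ)) *
                  (μH[(n:ℝ)] {x | x ∈ frontier Ω ∧ (2:ℝ) ^ i < u x}).toReal
              else 0) := by
  obtain ⟨c, c_pos, slicing⟩ :=
    slicing_lower_bound_convex_general hn hα.1 hs.1 (one_pos.trans_le hp)
  exact ⟨c, c_pos, fun Ω hΩo hΩ Hα hHm _ hH u hu hu0 _ _ =>
    (ofReal_mul_tsum_toReal_le c_pos.le (fun _ => by positivity) _ _ _).trans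
      (slicing Ω hΩo hΩ Hα hHm hH u hu hu0)⟩
end
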